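/- arXiv:2502.12229 — 2 statements merged into one kernel-verified Lean document; each statement's English description precedes it below -/
import Mathlib

section
/- Let μ be a measure on ℝ with all moments finite and infinite support. Assume: (1) μ is determinate, (2) supp(μ) ⊆ [0,∞), (3) 0 ∈ supp(μ), (4) μ({0}) = 0. Then the index of determinacy of μ at 0 is infinite; that is, for every k ∈ ℕ₀, the measure x^{2k}·μ (the measure with density x ↦ x^{2k} with respect to μ) is determinate. -/
open MeasureTheory Polynomial Filter

noncomputable section

/-- A measure on `ℝ` has all moments finite. -/
def HasAllMoments (μ : Measure ℝ) : Prop :=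
  ∀ n : ℕ, Integrable (fun x : ℝ => |x| ^ n) μ

/-- The (topological) support of a measure on `ℝ`: points all of whose
neighborhoods have positive measure. -/
def mSupp (μ : Measure ℝ) : Set ℝ :=
  {x : ℝ | ∀ U ∈ nhds x, μ U ≠ 0}

/-- A measure with all moments finite is determinate if it is the unique measure
with all moments finite having its moment sequence. -/
def IsDeterminate (μ : Measure ℝ) : Prop :=
  ∀ ν : Measure ℝ, HasAllMoments ν →
    (∀ n : ℕ, ∫ x, x ^ n ∂ν = ∫ x, x ^ n ∂μ) → ν = μ

/-- The complex polynomial functions are dense in `L²(ν)`. -/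
def PolyDense (ν : Measure ℝ) : Prop :=
  Dense {f : Lp ℂ 2 ν | ∃ p : Polynomial ℂ, ⇑f =ᵐ[ν] fun x : ℝ => p.eval (x : ℂ)}

/-!
Suppose `σ = (x - a)² μ` were indeterminate. Comparing `σ` with a second measure having the same
moments shows that evaluation at a non-real point is bounded on the polynomials with the norm of
`L²(σ)`, and a Grönwall estimate for the orthonormal polynomials makes these evaluations bounded
uniformly on compact sets. Writing `p = p(a) + (x - a) q` and averaging over a small neighbourhood
of `a ∈ supp μ`, one finds that evaluation at `a` is bounded in the norm of `L²(μ)`. Then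
`p ↦ ∫ p dμ - c p(a)` is positive semidefinite for some `c > 0`, so by Hamburger's theorem it is
integration against a measure `τ`; determinacy of `μ` gives `μ = τ + c δ_a`, contradicting
`μ {a} = 0`. The step from `μ` to `(x - a)² μ` preserves the hypotheses and can be iterated.
-/

section NonnegativePolynomials

variable {p : ℝ[X]}

lemma exists_forall_eval_le_of_eval_nonneg (hp : ∀ x, 0 ≤ p.eval x) :
    ∃ a, ∀ x, p.eval a ≤ p.eval x := by
  by_cases hdeg : 0 < p.degree
  · refine p.continuous.exists_forall_le ?_
    have hnorm := p.tendsto_norm_atTop hdeg (z := id) tendsto_norm_cocompact_atTop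
    simpa only [id, Real.norm_of_nonneg (hp _)] using hnorm
  · rw [eq_C_of_degree_le_zero (not_lt.1 hdeg)]
    exact ⟨0, fun x => by simp only [eval_C, le_refl]⟩

lemma exists_eq_C_eval_add_sq_mul_of_forall_eval_le {a : ℝ} (ha : ∀ x, p.eval a ≤ p.eval x) :
    ∃ q : ℝ[X], p = C (p.eval a) + (X - C a) ^ 2 * q := by
  suffices (X - C a) ^ 2 ∣ p - C (p.eval a) from
    this.imp fun q hq => by rw [← hq, add_sub_cancel]
  have hderiv : p.derivative.eval a = 0 :=
    IsLocalMin.hasDerivAt_eq_zero (Eventually.of_forall ha) (p.hasDerivAt a)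
  by_cases h0 : p - C (p.eval a) = 0
  · exact h0 ▸ dvd_zero _
  · exact (le_rootMultiplicity_iff h0).1 <|
      (one_lt_rootMultiplicity_iff_isRoot h0).2 ⟨by simp, by simpa using hderiv⟩

lemma eval_nonneg_of_forall_ne {a : ℝ} (hp : ∀ x ≠ a, 0 ≤ p.eval x) (x : ℝ) : 0 ≤ p.eval x :=
  (isClosed_le continuous_const p.continuous).closure_subset_iff.2 hp
    ((dense_compl_singleton a).closure_eq ▸ Set.mem_univ x)

-- Subtracting the minimum creates a double root, so the degree drops by two at each step.
theorem isSumSq_of_eval_nonneg (hp : ∀ x, 0 ≤ p.eval x) : IsSumSq p := by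
  induction hn : p.natDegree using Nat.strong_induction_on generalizing p with | _ n ih => ?_
  obtain ⟨a, ha⟩ := exists_forall_eval_le_of_eval_nonneg hp
  obtain ⟨q, hq⟩ := exists_eq_C_eval_add_sq_mul_of_forall_eval_le ha
  have hC : IsSumSq (C (p.eval a)) := by
    rw [← Real.mul_self_sqrt (hp a), C_mul]
    exact IsSumSq.mul_self _
  have hq_nonneg : ∀ x, 0 ≤ q.eval x := eval_nonneg_of_forall_ne fun x hx => by
    have heval : p.eval x = p.eval a + (x - a) ^ 2 * q.eval x := by
      conv_lhs => rw [hq]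
      simp
    have hprod : 0 ≤ (x - a) ^ 2 * q.eval x := by linarith [ha x]
    exact nonneg_of_mul_nonneg_right hprod (sq_pos_of_ne_zero (sub_ne_zero.2 hx))
  rw [hq]
  refine hC.add (IsSumSq.mul (by rw [sq]; exact IsSumSq.mul_self _) ?_)
  rcases eq_or_ne q 0 with rfl | hq0
  · exact IsSumSq.zero
  · refine ih q.natDegree ?_ hq_nonneg rfl
    rw [← hn, hq, natDegree_C_add, natDegree_mul (pow_ne_zero 2 (X_sub_C_ne_zero a)) hq0]
    simp

lemma map_nonneg_of_eval_nonneg {L : ℝ[X] →ₗ[ℝ] ℝ} (hL : ∀ q, 0 ≤ L (q * q))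
    (hp : ∀ x, 0 ≤ p.eval x) : 0 ≤ L p := by
  have hsum := isSumSq_of_eval_nonneg hp
  clear hp
  induction hsum using IsSumSq.rec' with
  | zero => exact (map_zero L).ge
  | sq_add hq _ ih =>
    obtain ⟨q, rfl⟩ := hq
    rw [map_add]
    exact add_nonneg (hL q) ih

end NonnegativePolynomials

section Moments

variable {μ ν : Measure ℝ}

lemma HasAllMoments.isFiniteMeasure (hμ : HasAllMoments μ) : IsFiniteMeasure μ := by
  rw [← integrable_const_iff_isFiniteMeasure (one_ne_zero (α := ℝ))]
  simpa using hμ 0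

variable {𝕜 : Type*} [RCLike 𝕜]

lemma HasAllMoments.integrable_eval_ofReal (hμ : HasAllMoments μ) (q : 𝕜[X]) :
    Integrable (fun x : ℝ => q.eval (algebraMap ℝ 𝕜 x)) μ := by
  simp only [eval_eq_sum, Polynomial.sum]
  refine integrable_finsetSum _ fun n _ => ((hμ n).mono' ?_ (ae_of_all _ fun x => ?_)).const_mul _
  · exact ((RCLike.continuous_ofReal (K := 𝕜)).pow n).aestronglyMeasurable
  · simp

lemma HasAllMoments.integrable_eval (hμ : HasAllMoments μ) (p : ℝ[X]) :
    Integrable (fun x => p.eval x) μ :=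
  hμ.integrable_eval_ofReal p

/-- The functional `Xⁿ ↦ ∫ xⁿ ∂μ` on polynomials with coefficients in `𝕜`. It is defined from the
moments, so that it visibly depends on nothing else. -/
def momentFunctional (𝕜 : Type*) [RCLike 𝕜] (μ : Measure ℝ) : 𝕜[X] →ₗ[𝕜] 𝕜 :=
  lsum fun n => ((∫ x, x ^ n ∂μ : ℝ) : 𝕜) • LinearMap.id

lemma momentFunctional_X_pow (n : ℕ) :
    momentFunctional 𝕜 μ (X ^ n) = ((∫ x, x ^ n ∂μ : ℝ) : 𝕜) := by
  simp [momentFunctional, ← monomial_one_right_eq_X_pow, RCLike.real_smul_eq_coe_mul]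

lemma momentFunctional_congr (h : ∀ n : ℕ, ∫ x, x ^ n ∂ν = ∫ x, x ^ n ∂μ) :
    momentFunctional 𝕜 ν = momentFunctional 𝕜 μ := by
  simp only [momentFunctional, h]

lemma HasAllMoments.momentFunctional_eq_integral_ofReal (hμ : HasAllMoments μ) (q : 𝕜[X]) :
    momentFunctional 𝕜 μ q = ∫ x, q.eval (algebraMap ℝ 𝕜 x) ∂μ := by
  induction q using Polynomial.induction_on' with
  | add p q hp hq =>
    simp only [map_add, eval_add]
    rw [integral_add (hμ.integrable_eval_ofReal p) (hμ.integrable_eval_ofReal q), hp, hq]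
  | monomial n a =>
    rw [← mul_one a, ← smul_eq_mul, ← smul_monomial, map_smul, monomial_one_right_eq_X_pow,
      momentFunctional_X_pow, ← integral_ofReal]
    simp [integral_const_mul]

lemma HasAllMoments.momentFunctional_eq_integral (hμ : HasAllMoments μ) (p : ℝ[X]) :
    momentFunctional ℝ μ p = ∫ x, p.eval x ∂μ :=
  hμ.momentFunctional_eq_integral_ofReal p

lemma HasAllMoments.integral_eval_ofReal_eq (hμ : HasAllMoments μ) (hν : HasAllMoments ν)
    (h : ∀ n : ℕ, ∫ x, x ^ n ∂ν = ∫ x, x ^ n ∂μ) (q : 𝕜[X]) :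
    ∫ x, q.eval (algebraMap ℝ 𝕜 x) ∂ν = ∫ x, q.eval (algebraMap ℝ 𝕜 x) ∂μ := by
  rw [← hν.momentFunctional_eq_integral_ofReal, momentFunctional_congr h,
    hμ.momentFunctional_eq_integral_ofReal]

lemma HasAllMoments.integral_eval_eq (hμ : HasAllMoments μ) (hν : HasAllMoments ν)
    (h : ∀ n : ℕ, ∫ x, x ^ n ∂ν = ∫ x, x ^ n ∂μ) (p : ℝ[X]) :
    ∫ x, p.eval x ∂ν = ∫ x, p.eval x ∂μ :=
  hμ.integral_eval_ofReal_eq hν h p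

lemma momentFunctional_map (p : ℝ[X]) :
    momentFunctional 𝕜 μ (p.map (algebraMap ℝ 𝕜)) = momentFunctional ℝ μ p := by
  induction p using Polynomial.induction_on' with
  | add p q hp hq => simp [hp, hq]
  | monomial n a => simp [momentFunctional]

lemma hasAllMoments_of_integrable_pow_two_mul
    (h : ∀ n : ℕ, Integrable (fun x : ℝ => x ^ (2 * n)) μ) : HasAllMoments μ := by
  intro n
  have hone : Integrable (fun _ : ℝ => (1 : ℝ)) μ := by simpa using h 0
  refine (hone.add (h n)).mono' (by fun_prop) (ae_of_all _ fun x => ?_)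
  rw [Real.norm_of_nonneg (by positivity), Pi.add_apply, pow_mul', ← sq_abs, abs_pow]
  nlinarith [sq_nonneg (|x| ^ n - 1)]

end Moments

section Hamburger

open CompactlySupported

lemma exists_extension_of_map_mul_self_nonneg {L : ℝ[X] →ₗ[ℝ] ℝ} (hL : ∀ q, 0 ≤ L (q * q)) :
    ∃ Λ : (ℝ[X] × C_c(ℝ, ℝ)) →ₗ[ℝ] ℝ, (∀ p, Λ (p, 0) = L p) ∧
      ∀ p f, (∀ x, 0 ≤ p.eval x + f x) → 0 ≤ Λ (p, f) := by
  let nonnegCone : PointedCone ℝ (ℝ[X] × C_c(ℝ, ℝ)) :=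
    { carrier := {z | ∀ x, 0 ≤ z.1.eval x + z.2 x}
      add_mem' := fun {y z} hy hz x => by
        simpa [add_add_add_comm] using add_nonneg (hy x) (hz x)
      zero_mem' := fun x => by simp
      smul_mem' := by
        rintro ⟨c, hc⟩ z hz x
        simpa [mul_add] using mul_nonneg hc (hz x) }
  let onPolynomials : (ℝ[X] × C_c(ℝ, ℝ)) →ₗ.[ℝ] ℝ :=
    { domain := LinearMap.ker (LinearMap.snd ℝ ℝ[X] C_c(ℝ, ℝ))
      toFun := L ∘ₗ LinearMap.fst ℝ ℝ[X] C_c(ℝ, ℝ) ∘ₗ Submodule.subtype _ }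
  have hnonneg (z : onPolynomials.domain) (hz : (z : ℝ[X] × C_c(ℝ, ℝ)) ∈ nonnegCone) :
      0 ≤ onPolynomials z := by
    obtain ⟨⟨p, f⟩, rfl : f = 0⟩ := z
    exact map_nonneg_of_eval_nonneg hL fun x => by simpa using hz x
  have hcofinal (z : ℝ[X] × C_c(ℝ, ℝ)) : ∃ y : onPolynomials.domain, ↑y + z ∈ nonnegCone := by
    obtain ⟨p, f⟩ := z
    obtain ⟨M, hM⟩ := f.hasCompactSupport.exists_bound_of_continuous f.continuous
    refine ⟨⟨(C M - p, 0), by simp [onPolynomials]⟩, fun x => ?_⟩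
    simpa [neg_le_iff_add_nonneg'] using neg_le_of_abs_le (hM x)
  obtain ⟨Λ, hΛL, hΛ_nonneg⟩ := riesz_extension nonnegCone onPolynomials hnonneg hcofinal
  exact ⟨Λ, fun p => hΛL ⟨(p, 0), by simp [onPolynomials]⟩, fun p f => hΛ_nonneg (p, f)⟩

/-- A bump function equal to `1` on `[-(R + 1), R + 1]`, for truncating polynomials. -/
def cutoff (R : ℕ) : ContDiffBump (0 : ℝ) :=
  ⟨R + 1, R + 2, by positivity, by linarith⟩

/-- The product of a polynomial with the cutoff function, as an element of `C_c(ℝ, ℝ)`. -/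
def truncation (R : ℕ) : ℝ[X] →ₗ[ℝ] C_c(ℝ, ℝ) where
  toFun p := ⟨⟨fun x => p.eval x * cutoff R x, p.continuous.mul (cutoff R).continuous⟩,
    (cutoff R).hasCompactSupport.mul_left⟩
  map_add' p q := by ext x; simp [add_mul]
  map_smul' c p := by ext x; simp [mul_assoc]

lemma truncation_apply (R : ℕ) (p : ℝ[X]) (x : ℝ) :
    truncation R p x = p.eval x * cutoff R x := rfl

lemma truncation_apply_of_abs_le {R : ℕ} (p : ℝ[X]) {x : ℝ} (hx : |x| ≤ R) :
    truncation R p x = p.eval x := by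
  have hball : x ∈ Metric.closedBall (0 : ℝ) (cutoff R).rIn := by
    simpa [cutoff] using hx.trans (le_add_of_nonneg_right zero_le_one)
  rw [truncation_apply, (cutoff R).one_of_mem_closedBall hball, mul_one]

lemma integrable_truncation (τ : Measure ℝ) [IsFiniteMeasureOnCompacts τ] (R : ℕ) (p : ℝ[X]) :
    Integrable (truncation R p) τ :=
  (truncation R p).continuous.integrable_of_hasCompactSupport (truncation R p).hasCompactSupport

lemma tendsto_integral_truncation {τ : Measure ℝ} {p : ℝ[X]}
    (hp : Integrable (fun x => p.eval x) τ) :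
    Tendsto (fun R => ∫ x, truncation R p x ∂τ) atTop (nhds (∫ x, p.eval x ∂τ)) := by
  refine tendsto_integral_of_dominated_convergence (fun x => ‖p.eval x‖)
    (fun R => (truncation R p).continuous.aestronglyMeasurable) hp.norm
    (fun R => ae_of_all _ fun x => ?_) (ae_of_all _ fun x => tendsto_const_nhds.congr' ?_)
  · rw [truncation_apply, norm_mul, Real.norm_of_nonneg (cutoff R).nonneg]
    exact mul_le_of_le_one_right (norm_nonneg _) (cutoff R).le_one
  · filter_upwards [eventually_ge_atTop ⌈|x|⌉₊] with R hR
    exact (truncation_apply_of_abs_le p (Nat.ceil_le.1 hR)).symm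

section DominatedByFunctional

variable {L : ℝ[X] →ₗ[ℝ] ℝ} {τ : Measure ℝ}

lemma integrable_eval_of_integral_truncation_le [IsFiniteMeasureOnCompacts τ] {p : ℝ[X]}
    (hp : ∀ x, 0 ≤ p.eval x) {B : ℝ} (hB : ∀ R, ∫ x, truncation R p x ∂τ ≤ B) :
    Integrable (fun x => p.eval x) τ := by
  have hcover : AECover τ atTop fun R : ℕ => Set.Icc (-(R : ℝ)) R :=
    aecover_Icc (tendsto_neg_atTop_atBot.comp tendsto_natCast_atTop_atTop)
      tendsto_natCast_atTop_atTop
  refine hcover.integrable_of_integral_norm_bounded B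
    (fun R => p.continuous.continuousOn.integrableOn_compact isCompact_Icc)
    (Eventually.of_forall fun R => ?_)
  calc ∫ x in Set.Icc (-(R : ℝ)) R, ‖p.eval x‖ ∂τ
      = ∫ x in Set.Icc (-(R : ℝ)) R, truncation R p x ∂τ :=
        setIntegral_congr_fun measurableSet_Icc fun x hx => by
          simp only [truncation_apply_of_abs_le p (abs_le.2 hx), Real.norm_of_nonneg (hp x)]
    _ ≤ ∫ x, truncation R p x ∂τ :=
        setIntegral_le_integral (integrable_truncation τ R p)
          (ae_of_all _ fun x => mul_nonneg (hp x) (cutoff R).nonneg)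
    _ ≤ B := hB R

lemma eventually_cocompact_abs_pow_le {ε : ℝ} (hε : 0 < ε) (n : ℕ) :
    ∀ᶠ x : ℝ in cocompact ℝ, |x ^ n| ≤ ε * x ^ (2 * (n + 1)) := by
  filter_upwards [tendsto_norm_cocompact_atTop.eventually_ge_atTop (max 1 ε⁻¹)] with x hx
  have hone : 1 ≤ |x| := (le_max_left _ _).trans hx
  have hinv : 1 ≤ ε * |x| := (inv_le_iff_one_le_mul₀' hε).1 ((le_max_right _ _).trans hx)
  calc |x ^ n| = |x| ^ n * 1 := by rw [mul_one, abs_pow]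
    _ ≤ |x| ^ (2 * n + 1) * (ε * |x|) := by gcongr; omega
    _ = ε * |x| ^ (2 * (n + 1)) := by ring
    _ = ε * x ^ (2 * (n + 1)) := by rw [pow_mul, sq_abs, ← pow_mul]

-- The defect `L - ∫ · ∂τ` is nonnegative at `ε X²ⁿ⁺² ± Xⁿ` for every `ε > 0`, hence it
-- vanishes at `Xⁿ`.
lemma integral_pow_eq_of_integral_le (hτ : ∀ p : ℝ[X], Integrable (fun x => p.eval x) τ)
    (hle : ∀ p : ℝ[X], (∀ᶠ x in cocompact ℝ, 0 ≤ p.eval x) → ∫ x, p.eval x ∂τ ≤ L p) (n : ℕ) :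
    ∫ x, x ^ n ∂τ = L (X ^ n) := by
  let defect : ℝ[X] → ℝ := fun p => L p - ∫ x, p.eval x ∂τ
  have hdefect (ε s : ℝ) : defect (ε • X ^ (2 * (n + 1)) + s • X ^ n) =
      ε * defect (X ^ (2 * (n + 1))) + s * defect (X ^ n) := by
    simp only [defect, eval_add, map_add, map_smul, eval_smul, smul_eq_mul]
    rw [integral_add ((hτ _).const_mul ε) ((hτ _).const_mul s), integral_const_mul,
      integral_const_mul]
    ring
  have hbound (ε : ℝ) (hε : 0 < ε) (s : ℝ) (hs : |s| = 1) :
      0 ≤ ε * defect (X ^ (2 * (n + 1))) + s * defect (X ^ n) := by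
    rw [← hdefect]
    refine sub_nonneg.2 (hle _ ?_)
    filter_upwards [eventually_cocompact_abs_pow_le hε n] with x hx
    have habs : |s * x ^ n| ≤ ε * x ^ (2 * (n + 1)) := by rwa [abs_mul, hs, one_mul]
    simpa [neg_le_iff_add_nonneg'] using neg_le_of_abs_le habs
  have hlim (s : ℝ) (hs : |s| = 1) : 0 ≤ s * defect (X ^ n) := by
    have htendsto : Tendsto (fun ε => ε * defect (X ^ (2 * (n + 1))) + s * defect (X ^ n))
        (nhdsWithin 0 (Set.Ioi 0)) (nhds (0 * defect (X ^ (2 * (n + 1))) + s * defect (X ^ n))) :=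
      (Continuous.tendsto (by fun_prop) 0).mono_left nhdsWithin_le_nhds
    rw [zero_mul, zero_add] at htendsto
    exact ge_of_tendsto htendsto (eventually_mem_nhdsWithin.mono fun ε hε => hbound ε hε s hs)
  have hpos := hlim 1 (by simp)
  have hneg := hlim (-1) (by simp)
  simp only [defect, eval_pow, eval_X] at hpos hneg
  linarith

end DominatedByFunctional

lemma exists_measure_integral_truncation_le {L : ℝ[X] →ₗ[ℝ] ℝ} (hL : ∀ q, 0 ≤ L (q * q)) :
    ∃ τ : Measure ℝ, IsFiniteMeasureOnCompacts τ ∧ ∀ (R : ℕ) (p : ℝ[X]),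
      (∀ x, truncation R p x ≤ p.eval x) → ∫ x, truncation R p x ∂τ ≤ L p := by
  obtain ⟨Λ, hΛL, hΛ_nonneg⟩ := exists_extension_of_map_mul_self_nonneg hL
  let Λc : C_c(ℝ, ℝ) →ₚ[ℝ] ℝ := .mk₀ (Λ ∘ₗ LinearMap.inr ℝ ℝ[X] C_c(ℝ, ℝ)) fun f hf =>
    hΛ_nonneg 0 f fun x => by simpa using hf x
  refine ⟨RealRMK.rieszMeasure Λc, inferInstance, fun R p hRp => ?_⟩
  have hsub : 0 ≤ Λ (p, -truncation R p) :=
    hΛ_nonneg p _ fun x => by simpa [← sub_eq_add_neg] using hRp x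
  rw [RealRMK.integral_rieszMeasure, ← hΛL, ← sub_nonneg]
  change 0 ≤ Λ (p, 0) - Λ (0, truncation R p)
  rwa [← map_sub, Prod.mk_sub_mk, sub_zero, zero_sub]

lemma truncation_le_eval_of_forall_le_abs {R : ℕ} {p : ℝ[X]}
    (hp : ∀ x : ℝ, R ≤ |x| → 0 ≤ p.eval x) (x : ℝ) : truncation R p x ≤ p.eval x := by
  rcases le_total |x| R with hx | hx
  · exact (truncation_apply_of_abs_le p hx).le
  · exact mul_le_of_le_one_right (hp x hx) (cutoff R).le_one

theorem exists_hasAllMoments_integral_pow_eq {L : ℝ[X] →ₗ[ℝ] ℝ} (hL : ∀ q, 0 ≤ L (q * q)) :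
    ∃ τ : Measure ℝ, HasAllMoments τ ∧ ∀ n : ℕ, ∫ x, x ^ n ∂τ = L (X ^ n) := by
  obtain ⟨τ, _, hτ⟩ := exists_measure_integral_truncation_le hL
  have hmom : HasAllMoments τ := hasAllMoments_of_integrable_pow_two_mul fun n => by
    have hnonneg (x : ℝ) : 0 ≤ (X ^ (2 * n) : ℝ[X]).eval x := by
      simpa using (even_two_mul n).pow_nonneg x
    simpa using integrable_eval_of_integral_truncation_le hnonneg fun R =>
      hτ R _ (truncation_le_eval_of_forall_le_abs fun x _ => hnonneg x)
  refine ⟨τ, hmom, integral_pow_eq_of_integral_le hmom.integrable_eval fun p hp => ?_⟩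
  rw [← Metric.cobounded_eq_cocompact] at hp
  obtain ⟨r, -, hr⟩ := hasBasis_cobounded_norm.eventually_iff.1 hp
  refine le_of_tendsto (tendsto_integral_truncation (hmom.integrable_eval p)) ?_
  filter_upwards [eventually_ge_atTop ⌈r⌉₊] with R hR
  exact hτ R p (truncation_le_eval_of_forall_le_abs fun x hx =>
    hr ((Nat.ceil_le.1 hR).trans hx))

end Hamburger

section CauchyKernel

open scoped BoundedContinuousFunction

section Separation

variable {E 𝕜 : Type*} [RCLike 𝕜] [TopologicalSpace E] [MeasurableSpace E]
  {P Q : Measure E} [IsFiniteMeasure P] [IsFiniteMeasure Q] {u : E →ᵇ 𝕜}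

lemma measure_eq_of_integral_pow_mul_star_pow_eq [PolishSpace E] [BorelSpace E]
    (hu : Function.Injective u)
    (h : ∀ j k : ℕ, ∫ x, (u ^ j * star u ^ k) x ∂P = ∫ x, (u ^ j * star u ^ k) x ∂Q) : P = Q := by
  refine ext_of_forall_mem_subalgebra_integral_eq_of_polish (𝕜 := 𝕜)
    (A := StarAlgebra.adjoin 𝕜 {u}) (fun x y hxy => ?_) fun v hv => ?_
  · exact ⟨u, ⟨u.toContinuousMapStarₐ 𝕜, ⟨u, StarAlgebra.subset_adjoin 𝕜 {u} rfl, rfl⟩, rfl⟩,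
      hu.ne hxy⟩
  · replace hv : v ∈ (StarAlgebra.adjoin 𝕜 {u}).toSubalgebra := hv
    rw [StarAlgebra.adjoin_toSubalgebra, Set.star_singleton, Set.singleton_union,
      ← Subalgebra.mem_toSubmodule, Algebra.adjoin_eq_span] at hv
    induction hv using Submodule.span_induction with
    | mem v hv =>
      obtain ⟨j, k, rfl⟩ := (Submonoid.mem_closure_pair _ _ _).1 hv
      exact h j k
    | zero => simp
    | add v w _ _ hv hw =>
      simp only [BoundedContinuousFunction.coe_add, Pi.add_apply]
      rw [integral_add (v.integrable P) (w.integrable P),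
        integral_add (v.integrable Q) (w.integrable Q), hv, hw]
    | smul c v _ hv =>
      simp only [BoundedContinuousFunction.coe_smul]
      rw [integral_smul, integral_smul, hv]

-- The relation lets one lower the total degree `j + k` as long as both exponents are positive.
lemma integral_pow_mul_star_pow_eq [OpensMeasurableSpace E] {c : 𝕜}
    (hu : u * star u = c • (u - star u))
    (h : ∀ k : ℕ, ∫ x, u x ^ k ∂P = ∫ x, u x ^ k ∂Q) (j k : ℕ) :
    ∫ x, (u ^ j * star u ^ k) x ∂P = ∫ x, (u ^ j * star u ^ k) x ∂Q := by
  induction hN : j + k using Nat.strong_induction_on generalizing j k with | _ N ih => ?_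
  rcases j with _ | j
  · have hstar (ρ : Measure E) : ∫ x, star (u x) ^ k ∂ρ = star (∫ x, u x ^ k ∂ρ) := by
      simpa using integral_conj (μ := ρ) (f := fun x => u x ^ k)
    calc ∫ x, (u ^ 0 * star u ^ k) x ∂P = star (∫ x, u x ^ k ∂P) := by simp [← hstar]
      _ = star (∫ x, u x ^ k ∂Q) := by rw [h]
      _ = ∫ x, (u ^ 0 * star u ^ k) x ∂Q := by simp [← hstar]
  rcases k with _ | k
  · simpa using h (j + 1)
  have hlower : u ^ (j + 1) * star u ^ (k + 1) =
      c • (u ^ (j + 1) * star u ^ k - u ^ j * star u ^ (k + 1)) := by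
    calc u ^ (j + 1) * star u ^ (k + 1) = u ^ j * star u ^ k * (u * star u) := by ring
      _ = c • (u ^ j * star u ^ k * (u - star u)) := by rw [hu, mul_smul_comm]
      _ = _ := by congr 1; ring
  have hlower_integral (ρ : Measure E) [IsFiniteMeasure ρ] :
      ∫ x, (u ^ (j + 1) * star u ^ (k + 1)) x ∂ρ =
        c • (∫ x, (u ^ (j + 1) * star u ^ k) x ∂ρ - ∫ x, (u ^ j * star u ^ (k + 1)) x ∂ρ) := by
    rw [hlower, ← integral_sub (BoundedContinuousFunction.integrable ρ _)
      (BoundedContinuousFunction.integrable ρ _), ← integral_smul]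
    rfl
  rw [hlower_integral, hlower_integral, ih _ (by omega) (j + 1) k rfl,
    ih _ (by omega) j (k + 1) rfl]

end Separation

variable {w : ℂ}

lemma ofReal_sub_ne_zero (hw : w.im ≠ 0) (x : ℝ) : (x : ℂ) - w ≠ 0 := fun h =>
  hw (by simpa using congrArg Complex.im h)

/-- The function `x ↦ 1 / (x - w)` on the real line, for `w` off the real line. -/
def cauchyKernel (hw : w.im ≠ 0) : ℝ →ᵇ ℂ :=
  .ofNormedAddCommGroup (fun x => ((x : ℂ) - w)⁻¹)
    (Continuous.inv₀ (by fun_prop) (ofReal_sub_ne_zero hw)) |w.im|⁻¹ fun x => by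
      rw [norm_inv]
      exact inv_anti₀ (abs_pos.2 hw) (by simpa using Complex.abs_im_le_norm ((x : ℂ) - w))

lemma cauchyKernel_apply (hw : w.im ≠ 0) (x : ℝ) : cauchyKernel hw x = ((x : ℂ) - w)⁻¹ := rfl

lemma cauchyKernel_injective (hw : w.im ≠ 0) : Function.Injective (cauchyKernel hw) :=
  fun x y hxy => by simpa [cauchyKernel_apply] using hxy

lemma cauchyKernel_mul_star (hw : w.im ≠ 0) : cauchyKernel hw * star (cauchyKernel hw) =
    (w - star w)⁻¹ • (cauchyKernel hw - star (cauchyKernel hw)) := by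
  ext x
  have hx := ofReal_sub_ne_zero hw x
  have hx_star : (x : ℂ) - star w ≠ 0 := by
    simpa using ofReal_sub_ne_zero (w := star w) (by simpa using hw) x
  have hw_star : w - star w ≠ 0 := fun h =>
    hw (Complex.conj_eq_iff_im.1 (sub_eq_zero.1 h).symm)
  have hstar : star ((x : ℂ) - w)⁻¹ = ((x : ℂ) - star w)⁻¹ := by simp
  change ((x : ℂ) - w)⁻¹ * star ((x : ℂ) - w)⁻¹ =
    (w - star w)⁻¹ * (((x : ℂ) - w)⁻¹ - star ((x : ℂ) - w)⁻¹)
  rw [hstar]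
  field_simp
  ring

theorem measure_eq_of_integral_cauchyKernel_pow_eq {μ ν : Measure ℝ} [IsFiniteMeasure μ]
    [IsFiniteMeasure ν] (hw : w.im ≠ 0)
    (h : ∀ k : ℕ, ∫ x, cauchyKernel hw x ^ k ∂μ = ∫ x, cauchyKernel hw x ^ k ∂ν) : μ = ν :=
  measure_eq_of_integral_pow_mul_star_pow_eq (cauchyKernel_injective hw)
    (integral_pow_mul_star_pow_eq (cauchyKernel_mul_star hw) h)

lemma eval_sub_eval_eq_mul_eval_divByMonic {R : Type*} [CommRing R] (p : R[X]) (w z : R) :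
    p.eval z - p.eval w = (z - w) * (p /ₘ (X - C w)).eval z := by
  simpa using (congrArg (eval z) (X_sub_C_mul_divByMonic_eq_sub_modByMonic p w)).symm

lemma eval_mul_cauchyKernel (hw : w.im ≠ 0) (q : ℂ[X]) (x : ℝ) :
    q.eval (x : ℂ) * cauchyKernel hw x =
      q.eval w * cauchyKernel hw x + (q /ₘ (X - C w)).eval (x : ℂ) := by
  rw [← sub_eq_iff_eq_add', ← sub_mul, eval_sub_eval_eq_mul_eval_divByMonic, mul_right_comm,
    cauchyKernel_apply, mul_inv_cancel₀ (ofReal_sub_ne_zero hw x), one_mul]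

lemma HasAllMoments.integrable_eval_mul_pow {μ : Measure ℝ} (hμ : HasAllMoments μ) (q : ℂ[X])
    (f : ℝ →ᵇ ℂ) (k : ℕ) : Integrable (fun x : ℝ => q.eval (x : ℂ) * f x ^ k) μ :=
  (hμ.integrable_eval_ofReal q).mul_bdd (c := ‖f‖ ^ k) (f.continuous.pow k).aestronglyMeasurable
    (ae_of_all _ fun x => (norm_pow_le _ k).trans (by gcongr; exact f.norm_coe_le_norm x))

lemma HasAllMoments.integral_eval_mul_cauchyKernel_pow_succ {μ : Measure ℝ}
    (hμ : HasAllMoments μ) (hw : w.im ≠ 0) (q : ℂ[X]) (k : ℕ) :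
    ∫ x : ℝ, q.eval (x : ℂ) * cauchyKernel hw x ^ (k + 1) ∂μ =
      q.eval w * ∫ x : ℝ, cauchyKernel hw x ^ (k + 1) ∂μ +
        ∫ x : ℝ, (q /ₘ (X - C w)).eval (x : ℂ) * cauchyKernel hw x ^ k ∂μ := by
  have hpow : Integrable (fun x : ℝ => cauchyKernel hw x ^ (k + 1)) μ := by
    simpa using hμ.integrable_eval_mul_pow 1 (cauchyKernel hw) (k + 1)
  rw [← integral_const_mul, ← integral_add (hpow.const_mul _) (hμ.integrable_eval_mul_pow _ _ k)]
  congr 1 with x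
  rw [pow_succ', ← mul_assoc, eval_mul_cauchyKernel]
  ring

end CauchyKernel

section BoundedEval

/-- Evaluation at `z` is bounded on the real polynomials with respect to the norm of `L²(μ)`. -/
def HasBoundedEval (μ : Measure ℝ) (z : ℂ) : Prop :=
  ∃ K : ℝ, 0 ≤ K ∧ ∀ p : ℝ[X], ‖aeval z p‖ ^ 2 ≤ K * ∫ x, p.eval x ^ 2 ∂μ

variable {σ ν : Measure ℝ} {w : ℂ}

-- Take the first `k` at which the integrals of the powers of the Cauchy kernel differ: dividing
-- by `X - w` lowers the power of the kernel, and only the first quotient step contributes.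
lemma exists_eval_mul_eq_integral_sub_integral (hσ : HasAllMoments σ) (hν : HasAllMoments ν)
    (heq : ∀ n : ℕ, ∫ x, x ^ n ∂ν = ∫ x, x ^ n ∂σ) (hne : ν ≠ σ) (hw : w.im ≠ 0) :
    ∃ G : ℂ, G ≠ 0 ∧ ∃ k : ℕ, ∀ q : ℂ[X], q.eval w * G =
      ∫ x : ℝ, q.eval (x : ℂ) * cauchyKernel hw x ^ k ∂ν -
        ∫ x : ℝ, q.eval (x : ℂ) * cauchyKernel hw x ^ k ∂σ := by
  classical
  have := hσ.isFiniteMeasure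
  have := hν.isFiniteMeasure
  have hdiffer : ∃ k : ℕ, ∫ x, cauchyKernel hw x ^ k ∂ν ≠ ∫ x, cauchyKernel hw x ^ k ∂σ := by
    by_contra! hall
    exact hne (measure_eq_of_integral_cauchyKernel_pow_eq hw hall)
  have hzero (q : ℂ[X]) : ∫ x : ℝ, q.eval (x : ℂ) * cauchyKernel hw x ^ 0 ∂ν =
      ∫ x : ℝ, q.eval (x : ℂ) * cauchyKernel hw x ^ 0 ∂σ := by
    simpa using hσ.integral_eval_ofReal_eq hν heq q
  have hbefore (j : ℕ) (hj : j < Nat.find hdiffer) (q : ℂ[X]) :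
      ∫ x : ℝ, q.eval (x : ℂ) * cauchyKernel hw x ^ j ∂ν =
        ∫ x : ℝ, q.eval (x : ℂ) * cauchyKernel hw x ^ j ∂σ := by
    induction j generalizing q with
    | zero => exact hzero q
    | succ j ih =>
      rw [hσ.integral_eval_mul_cauchyKernel_pow_succ, hν.integral_eval_mul_cauchyKernel_pow_succ,
        not_not.1 (Nat.find_min hdiffer hj), ih (j.lt_succ_self.trans hj)]
  obtain ⟨k, hk⟩ : ∃ k, Nat.find hdiffer = k + 1 :=
    Nat.exists_eq_succ_of_ne_zero fun h0 => Nat.find_spec hdiffer (by simpa [h0] using hzero 1)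
  refine ⟨_, sub_ne_zero.2 (hk ▸ Nat.find_spec hdiffer), k + 1, fun q => ?_⟩
  rw [hσ.integral_eval_mul_cauchyKernel_pow_succ, hν.integral_eval_mul_cauchyKernel_pow_succ,
    hbefore k (by omega)]
  ring

lemma sq_integral_le_measureReal_univ_mul {α : Type*} {_ : MeasurableSpace α} {ρ : Measure α}
    [IsFiniteMeasure ρ] {f : α → ℝ} (hf : MemLp f 2 ρ) :
    (∫ x, f x ∂ρ) ^ 2 ≤ ρ.real Set.univ * ∫ x, f x ^ 2 ∂ρ := by
  have hquad (t : ℝ) :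
      0 ≤ ρ.real Set.univ * (t * t) + -(2 * ∫ x, f x ∂ρ) * t + ∫ x, f x ^ 2 ∂ρ := by
    have hf1 : Integrable f ρ := hf.integrable one_le_two
    calc 0 ≤ ∫ x, (t * t - 2 * t * f x + f x ^ 2) ∂ρ :=
          integral_nonneg fun x => (sq_nonneg (t - f x)).trans_eq (by ring)
      _ = _ := by
          rw [integral_add (by fun_prop) hf.integrable_sq, integral_sub (by fun_prop) (by fun_prop),
            integral_const, integral_const_mul, smul_eq_mul]
          ring
  have hdiscrim := discrim_le_zero hquad
  simp only [discrim] at hdiscrim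
  linarith

lemma HasAllMoments.memLp_two_eval (hσ : HasAllMoments σ) (p : ℝ[X]) :
    MemLp (fun x => p.eval x) 2 σ :=
  (memLp_two_iff_integrable_sq p.continuous.aestronglyMeasurable).2 <| by
    simp only [← eval_pow]
    exact hσ.integrable_eval _

lemma eval_map_ofReal (p : ℝ[X]) (x : ℝ) : (p.map (algebraMap ℝ ℂ)).eval (x : ℂ) = p.eval x :=
  eval_map_apply (algebraMap ℝ ℂ) x

lemma HasAllMoments.sq_norm_integral_eval_mul_pow_le (hσ : HasAllMoments σ) (p : ℝ[X])
    (f : BoundedContinuousFunction ℝ ℂ) (k : ℕ) :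
    ‖∫ x : ℝ, (p.map (algebraMap ℝ ℂ)).eval (x : ℂ) * f x ^ k ∂σ‖ ^ 2 ≤
      (‖f‖ ^ k) ^ 2 * (σ.real Set.univ * ∫ x, p.eval x ^ 2 ∂σ) := by
  have := hσ.isFiniteMeasure
  have hnorm : ‖∫ x : ℝ, (p.map (algebraMap ℝ ℂ)).eval (x : ℂ) * f x ^ k ∂σ‖ ≤
      ‖f‖ ^ k * ∫ x, ‖p.eval x‖ ∂σ := by
    rw [← integral_const_mul]
    refine norm_integral_le_of_norm_le ((hσ.memLp_two_eval p).integrable one_le_two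
      |>.norm.const_mul _) (ae_of_all _ fun x => ?_)
    rw [norm_mul, eval_map_ofReal, Complex.norm_real, mul_comm, norm_pow]
    gcongr
    exact f.norm_coe_le_norm x
  have hcs := sq_integral_le_measureReal_univ_mul (hσ.memLp_two_eval p).norm
  simp only [Real.norm_eq_abs, sq_abs] at hcs hnorm
  calc _ ≤ (‖f‖ ^ k * ∫ x, |p.eval x| ∂σ) ^ 2 := by gcongr
    _ = (‖f‖ ^ k) ^ 2 * (∫ x, |p.eval x| ∂σ) ^ 2 := mul_pow ..
    _ ≤ _ := by gcongr

theorem hasBoundedEval_of_ne (hσ : HasAllMoments σ) (hν : HasAllMoments ν)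
    (heq : ∀ n : ℕ, ∫ x, x ^ n ∂ν = ∫ x, x ^ n ∂σ) (hne : ν ≠ σ) (hw : w.im ≠ 0) :
    HasBoundedEval σ w := by
  obtain ⟨G, hG, k, hGk⟩ := exists_eval_mul_eq_integral_sub_integral hσ hν heq hne hw
  let B : ℝ := (‖cauchyKernel hw‖ ^ k) ^ 2
  refine ⟨2 * B * (ν.real Set.univ + σ.real Set.univ) / ‖G‖ ^ 2, by positivity, fun p => ?_⟩
  rw [div_mul_eq_mul_div, le_div_iff₀ (by positivity), ← mul_pow, ← norm_mul,
    ← eval_map_algebraMap, hGk]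
  have hpν := hν.sq_norm_integral_eval_mul_pow_le p (cauchyKernel hw) k
  have hpσ := hσ.sq_norm_integral_eval_mul_pow_le p (cauchyKernel hw) k
  have hint : ∫ x, p.eval x ^ 2 ∂ν = ∫ x, p.eval x ^ 2 ∂σ := by
    simp only [← eval_pow]
    exact hσ.integral_eval_eq hν heq _
  rw [hint] at hpν
  have hsub := (pow_le_pow_left₀ (norm_nonneg _) (norm_sub_le _ _) 2).trans
    ((add_sq_le ..).trans (mul_le_mul_of_nonneg_left (add_le_add hpν hpσ) zero_le_two))
  exact hsub.trans_eq (by ring)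

end BoundedEval

section OrthonormalPolynomials

/-- The polynomials `P n`, with `P n` of degree `n`, are orthonormal for the bilinear form
`(p, q) ↦ L (p * q)`; no conjugation is involved, also over `ℂ`. -/
def IsOrthonormalFor {K : Type*} [Field K] (L : K[X] →ₗ[K] K) (P : Polynomial.Sequence K) : Prop :=
  ∀ n m, L (P n * P m) = if n = m then 1 else 0

/-- The coefficientwise image of a sequence of polynomials under a homomorphism of fields. -/
def mapSequence {K F : Type*} [Field K] [Field F] (f : K →+* F) (P : Polynomial.Sequence K) :
    Polynomial.Sequence F where
  elems' n := (P n).map f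
  degree_eq' n := by rw [degree_map, P.degree_eq]

lemma mapSequence_apply {K F : Type*} [Field K] [Field F] (f : K →+* F)
    (P : Polynomial.Sequence K) (n : ℕ) : mapSequence f P n = (P n).map f := rfl

namespace IsOrthonormalFor

variable {K : Type*} [Field K] {L : K[X] →ₗ[K] K} {P : Polynomial.Sequence K}

lemma eq_sum (hP : IsOrthonormalFor L P) {q : K[X]} {n : ℕ} (hq : q.degree < n) :
    q = ∑ m ∈ Finset.range n, L (q * P m) • P m := by
  have hspan : q ∈ Submodule.span K (P '' Set.Iio n) := by
    rw [P.span_degreeLT fun i _ => (leadingCoeff_ne_zero.2 (P.ne_zero i)).isUnit]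
    exact mem_degreeLT.2 hq
  clear hq
  induction hspan using Submodule.span_induction with
  | mem q hq =>
    obtain ⟨k, hk, rfl⟩ := hq
    simp [hP k, Set.mem_Iio.1 hk]
  | zero => simp
  | add p q _ _ hp hq =>
    simp only [add_mul, map_add, add_smul, Finset.sum_add_distrib]
    rw [← hp, ← hq]
  | smul c q _ hq =>
    simp only [smul_mul_assoc, map_smul, smul_assoc, ← Finset.smul_sum]
    rw [← hq]

lemma map_mul_eq_zero (hP : IsOrthonormalFor L P) {q : K[X]} {n : ℕ} (hq : q.degree < n) :
    L (P n * q) = 0 := by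
  rw [hP.eq_sum hq, Finset.mul_sum, map_sum]
  refine Finset.sum_eq_zero fun m hm => ?_
  rw [mul_smul_comm, map_smul, hP, if_neg (Finset.mem_range.1 hm).ne', smul_zero]

lemma map_sum_smul_mul_self (hP : IsOrthonormalFor L P) (c : ℕ → K) (n : ℕ) :
    L ((∑ m ∈ Finset.range n, c m • P m) * ∑ m ∈ Finset.range n, c m • P m) =
      ∑ m ∈ Finset.range n, c m ^ 2 := by
  simp only [Finset.sum_mul_sum, smul_mul_smul_comm, map_sum, map_smul, hP _, smul_eq_mul, mul_ite,
    mul_one, mul_zero, Finset.sum_ite_eq, sq]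
  exact Finset.sum_congr rfl fun m hm => if_pos hm

lemma eval_sub_eval (hP : IsOrthonormalFor L P) (n : ℕ) (w z : K) :
    (P n).eval z - (P n).eval w =
      (z - w) * ∑ m ∈ Finset.range n, L ((P n /ₘ (X - C w)) * P m) * (P m).eval z := by
  have hdeg : (P n /ₘ (X - C w)).degree < n := by
    simpa using degree_divByMonic_lt (P n) (X - C w) (P.ne_zero n) (by simp)
  rw [eval_sub_eval_eq_mul_eval_divByMonic, congrArg (eval z) (hP.eq_sum hdeg), eval_finsetSum]
  simp only [eval_smul, smul_eq_mul]

lemma mapSequence_momentFunctional {𝕜 : Type*} [RCLike 𝕜] {σ : Measure ℝ}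
    {P : Polynomial.Sequence ℝ} (hP : IsOrthonormalFor (momentFunctional ℝ σ) P) :
    IsOrthonormalFor (momentFunctional 𝕜 σ) (mapSequence (algebraMap ℝ 𝕜) P) := by
  intro n m
  rw [mapSequence_apply, mapSequence_apply, ← Polynomial.map_mul, momentFunctional_map, hP]
  split_ifs <;> simp

end IsOrthonormalFor

theorem exists_isOrthonormalFor {L : ℝ[X] →ₗ[ℝ] ℝ} (hL : ∀ p, p ≠ 0 → 0 < L (p * p)) :
    ∃ P : Polynomial.Sequence ℝ, IsOrthonormalFor L P := by
  let core : InnerProductSpace.Core ℝ ℝ[X] :=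
    { inner p q := L (p * q)
      conj_inner_symm p q := by simp [mul_comm]
      re_inner_nonneg p := by
        rcases eq_or_ne p 0 with rfl | hp
        · simp
        · exact (hL p hp).le
      add_left p q r := by simp [add_mul]
      smul_left p q r := by simp
      definite p hp := by_contra fun h => (hL p h).ne' hp }
  let _ := core.toNormedAddCommGroup
  let _ : InnerProductSpace ℝ ℝ[X] := InnerProductSpace.ofCore core.toCore
  let monomials : ℕ → ℝ[X] := fun n => X ^ n
  let P : ℕ → ℝ[X] := InnerProductSpace.gramSchmidtNormed ℝ monomials
  have hli : LinearIndependent ℝ monomials := by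
    simpa only [coe_basisMonomials, monomial_one_right_eq_X_pow]
      using (basisMonomials ℝ).linearIndependent
  have hspan (n : ℕ) : Submodule.span ℝ (P '' Set.Iio n) = degreeLT ℝ n := by
    rw [InnerProductSpace.span_gramSchmidtNormed, InnerProductSpace.span_gramSchmidt_Iio,
      degreeLT_eq_span_X_pow, Finset.coe_image, Finset.coe_range]
  have hdegree (n : ℕ) : (P n).degree = n := by
    have hlt : (P n).degree < (n + 1 : ℕ) := by
      rw [← mem_degreeLT, ← hspan]
      exact Submodule.subset_span ⟨n, n.lt_succ_self, rfl⟩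
    have hnlt : ¬(P n).degree < n := by
      rw [← mem_degreeLT, ← hspan]
      exact (InnerProductSpace.gramSchmidtNormed_linearIndependent hli).notMem_span_image
        (lt_irrefl n)
    exact le_antisymm (Order.le_of_lt_succ hlt) (not_lt.1 hnlt)
  exact ⟨⟨P, hdegree⟩,
    orthonormal_iff_ite.1 (InnerProductSpace.gramSchmidtNormed_orthonormal hli)⟩

end OrthonormalPolynomials

section LocalBound

lemma sum_sq_le_of_le_add_mul_sum {h x : ℕ → ℝ} {c H : ℝ} (hc : 0 ≤ c) (hh : ∀ n, 0 ≤ h n)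
    (hx : ∀ n, 0 ≤ x n) (hH : ∀ N, ∑ n ∈ Finset.range N, h n ^ 2 ≤ H)
    (hle : ∀ n, x n ≤ h n + c * h n * ∑ m ∈ Finset.range n, h m * x m) (N : ℕ) :
    ∑ n ∈ Finset.range N, x n ^ 2 ≤ H * Real.exp (c * H) ^ 2 := by
  let S : ℕ → ℝ := fun n => 1 + c * ∑ m ∈ Finset.range n, h m * x m
  have hxS (n : ℕ) : x n ≤ h n * S n := (hle n).trans_eq (by ring)
  have hSsucc (n : ℕ) : S (n + 1) ≤ (1 + c * h n ^ 2) * S n + 0 := by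
    have := mul_le_mul_of_nonneg_left (hxS n) (mul_nonneg hc (hh n))
    simp only [S, Finset.sum_range_succ] at this ⊢
    linarith
  have hSexp (n : ℕ) : S n ≤ Real.exp (c * H) := by
    have hgronwall := discrete_gronwall (n₀ := 0) (b := fun _ => 0) (by simp [S])
      (fun n _ => hSsucc n) (fun n _ => by positivity) (fun _ _ => le_rfl) n.zero_le
    simp only [Finset.sum_const_zero, add_zero, Nat.Ico_zero_eq_range,
    ← Finset.mul_sum] at hgronwall
    refine hgronwall.trans ?_
    simp only [S, Finset.range_zero, Finset.sum_empty, mul_zero, add_zero, one_mul]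
    gcongr
    exact hH n
  calc ∑ n ∈ Finset.range N, x n ^ 2
      ≤ ∑ n ∈ Finset.range N, h n ^ 2 * Real.exp (c * H) ^ 2 :=
        Finset.sum_le_sum fun n _ => by
          rw [← mul_pow]
          exact pow_le_pow_left₀ (hx n)
            ((hxS n).trans (mul_le_mul_of_nonneg_left (hSexp n) (hh n))) 2
    _ ≤ H * Real.exp (c * H) ^ 2 := by
        rw [← Finset.sum_mul]
        gcongr
        exact hH N

lemma sum_sq_norm_le_of_sq_norm_sum_le {ι : Type*} {s : Finset ι} {v : ι → ℂ} {K : ℝ}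
    (hK : 0 ≤ K) (h : ∀ c : ι → ℝ, ‖∑ i ∈ s, c i • v i‖ ^ 2 ≤ K * ∑ i ∈ s, c i ^ 2) :
    ∑ i ∈ s, ‖v i‖ ^ 2 ≤ 2 * K := by
  have le_of_sq_le {S : ℝ} (hS : S ^ 2 ≤ K * S) : S ≤ K := by nlinarith
  have hre : ∑ i ∈ s, (v i).re ^ 2 ≤ K := le_of_sq_le <| by
    refine le_trans ?_ (h fun i => (v i).re)
    rw [← sq_abs]
    gcongr
    simpa [sq] using Complex.abs_re_le_norm (∑ i ∈ s, (v i).re • v i)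
  have him : ∑ i ∈ s, (v i).im ^ 2 ≤ K := le_of_sq_le <| by
    refine le_trans ?_ (h fun i => (v i).im)
    rw [← sq_abs]
    gcongr
    simpa [sq] using Complex.abs_im_le_norm (∑ i ∈ s, (v i).im • v i)
  calc ∑ i ∈ s, ‖v i‖ ^ 2 = ∑ i ∈ s, (v i).re ^ 2 + ∑ i ∈ s, (v i).im ^ 2 := by
        rw [← Finset.sum_add_distrib]
        exact Finset.sum_congr rfl fun i _ => by rw [Complex.sq_norm, Complex.normSq_apply]; ring
    _ ≤ 2 * K := by linarith

variable {σ : Measure ℝ} {w : ℂ}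

lemma IsOrthonormalFor.sum_sq_norm_integral_le {𝕜 : Type*} [RCLike 𝕜] {P : Polynomial.Sequence ℝ}
    (hP : IsOrthonormalFor (momentFunctional ℝ σ) P) (hσ : HasAllMoments σ) {f : ℝ → 𝕜}
    (hf : MemLp f 2 σ) (s : Finset ℕ) :
    ∑ n ∈ s, ‖∫ x, (((P n).eval x : ℝ) : 𝕜) * f x ∂σ‖ ^ 2 ≤ ‖hf.toLp f‖ ^ 2 := by
  have hmemLp (n : ℕ) : MemLp (fun x => (((P n).eval x : ℝ) : 𝕜)) 2 σ :=
    (hσ.memLp_two_eval (P n)).ofReal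
  have hinner {g : ℝ → 𝕜} (hg : MemLp g 2 σ) (n : ℕ) :
      inner 𝕜 ((hmemLp n).toLp _) (hg.toLp g) = ∫ x, (((P n).eval x : ℝ) : 𝕜) * g x ∂σ := by
    rw [L2.inner_def]
    refine integral_congr_ae ?_
    filter_upwards [hg.coeFn_toLp, (hmemLp n).coeFn_toLp] with x hgx hPx
    rw [hgx, hPx, RCLike.inner_apply, RCLike.conj_ofReal, mul_comm]
  have horth : Orthonormal 𝕜 fun n => (hmemLp n).toLp _ := by
    refine orthonormal_iff_ite.2 fun n m => ?_
    have hnm := hP n m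
    rw [hσ.momentFunctional_eq_integral] at hnm
    simp_rw [hinner, ← RCLike.ofReal_mul, ← eval_mul]
    rw [integral_ofReal, hnm]
    split_ifs <;> simp
  simpa only [hinner] using horth.sum_inner_products_le (hf.toLp f) (s := s)

lemma HasAllMoments.momentFunctional_divByMonic_mul_sub (hσ : HasAllMoments σ) (hw : w.im ≠ 0)
    (q r : ℂ[X]) :
    momentFunctional ℂ σ ((q /ₘ (X - C w)) * r) - momentFunctional ℂ σ (q * (r /ₘ (X - C w))) =
      r.eval w * ∫ x : ℝ, q.eval (x : ℂ) * cauchyKernel hw x ∂σ -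
        q.eval w * ∫ x : ℝ, r.eval (x : ℂ) * cauchyKernel hw x ∂σ := by
  have hint (p : ℂ[X]) : Integrable (fun x : ℝ => p.eval (x : ℂ) * cauchyKernel hw x) σ := by
    simpa using hσ.integrable_eval_mul_pow p (cauchyKernel hw) 1
  rw [← map_sub, hσ.momentFunctional_eq_integral_ofReal, ← integral_const_mul,
    ← integral_const_mul, ← integral_sub ((hint q).const_mul _) ((hint r).const_mul _)]
  congr 1 with x
  have hq := eval_mul_cauchyKernel hw q x
  have hr := eval_mul_cauchyKernel hw r x
  simp only [eval_sub, eval_mul, Complex.coe_algebraMap]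
  linear_combination q.eval (x : ℂ) * hr - r.eval (x : ℂ) * hq

/-- The size at `w` of `q` together with its function of the second kind `∫ q(x) / (x - w) ∂σ`;
for orthonormal `q` these are the two solutions of the three-term recurrence. -/
def solutionNorm (hw : w.im ≠ 0) (σ : Measure ℝ) (q : ℂ[X]) : ℝ :=
  ‖q.eval w‖ + ‖∫ x : ℝ, q.eval (x : ℂ) * cauchyKernel hw x ∂σ‖

lemma solutionNorm_nonneg (hw : w.im ≠ 0) (q : ℂ[X]) : 0 ≤ solutionNorm hw σ q := by
  unfold solutionNorm
  positivity

namespace IsOrthonormalFor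

variable {P : Polynomial.Sequence ℂ}

lemma norm_map_divByMonic_mul_le (hP : IsOrthonormalFor (momentFunctional ℂ σ) P)
    (hσ : HasAllMoments σ) (hw : w.im ≠ 0) {m n : ℕ} (hmn : m < n) :
    ‖momentFunctional ℂ σ ((P n /ₘ (X - C w)) * P m)‖ ≤
      solutionNorm hw σ (P n) * solutionNorm hw σ (P m) := by
  have hzero : momentFunctional ℂ σ (P n * (P m /ₘ (X - C w))) = 0 := by
    refine hP.map_mul_eq_zero ((degree_divByMonic_le _ _).trans_lt ?_)
    rw [P.degree_eq]
    exact_mod_cast hmn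
  have hidentity := hσ.momentFunctional_divByMonic_mul_sub hw (P n) (P m)
  rw [hzero, sub_zero] at hidentity
  rw [hidentity]
  refine (norm_sub_le _ _).trans ?_
  simp only [norm_mul, solutionNorm]
  rw [← sub_nonneg]
  ring_nf
  positivity

lemma norm_eval_le (hP : IsOrthonormalFor (momentFunctional ℂ σ) P) (hσ : HasAllMoments σ)
    (hw : w.im ≠ 0) {z : ℂ} {r : ℝ} (hz : ‖z - w‖ ≤ r) (n : ℕ) :
    ‖(P n).eval z‖ ≤ solutionNorm hw σ (P n) + r * solutionNorm hw σ (P n) *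
      ∑ m ∈ Finset.range n, solutionNorm hw σ (P m) * ‖(P m).eval z‖ := by
  have hr : 0 ≤ r := (norm_nonneg _).trans hz
  have hw_le : ‖(P n).eval w‖ ≤ solutionNorm hw σ (P n) :=
    le_add_of_nonneg_right (norm_nonneg _)
  have hsum : ‖∑ m ∈ Finset.range n,
        momentFunctional ℂ σ ((P n /ₘ (X - C w)) * P m) * (P m).eval z‖ ≤
      ∑ m ∈ Finset.range n,
        solutionNorm hw σ (P n) * solutionNorm hw σ (P m) * ‖(P m).eval z‖ :=
    norm_sum_le_of_le _ fun m hm => by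
      rw [norm_mul]
      gcongr
      exact hP.norm_map_divByMonic_mul_le hσ hw (Finset.mem_range.1 hm)
  rw [sub_eq_iff_eq_add'.1 (hP.eval_sub_eval n w z)]
  refine (norm_add_le _ _).trans (add_le_add hw_le ?_)
  simp only [mul_assoc, ← Finset.mul_sum] at hsum ⊢
  rw [norm_mul]
  gcongr

end IsOrthonormalFor

lemma IsOrthonormalFor.exists_sum_sq_solutionNorm_le {P : Polynomial.Sequence ℝ}
    (hP : IsOrthonormalFor (momentFunctional ℝ σ) P) (hσ : HasAllMoments σ) (hw : w.im ≠ 0)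
    (hbdd : HasBoundedEval σ w) :
    ∃ H : ℝ, ∀ N, ∑ n ∈ Finset.range N,
      solutionNorm hw σ (mapSequence (algebraMap ℝ ℂ) P n) ^ 2 ≤ H := by
  have := hσ.isFiniteMeasure
  obtain ⟨K, hK, hbound⟩ := hbdd
  have hmemLp : MemLp (cauchyKernel hw) 2 σ :=
    MemLp.of_bound (cauchyKernel hw).continuous.aestronglyMeasurable ‖cauchyKernel hw‖
      (ae_of_all _ (cauchyKernel hw).norm_coe_le_norm)
  refine ⟨2 * (2 * K + ‖hmemLp.toLp _‖ ^ 2), fun N => ?_⟩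
  have heval : ∑ n ∈ Finset.range N, ‖aeval w (P n)‖ ^ 2 ≤ 2 * K :=
    sum_sq_norm_le_of_sq_norm_sum_le hK fun c => by
      have hparseval := hP.map_sum_smul_mul_self c N
      rw [hσ.momentFunctional_eq_integral] at hparseval
      simpa [← hparseval, ← sq] using hbound (∑ n ∈ Finset.range N, c n • P n)
  have hbessel := hP.sum_sq_norm_integral_le hσ hmemLp (Finset.range N)
  calc ∑ n ∈ Finset.range N, solutionNorm hw σ (mapSequence (algebraMap ℝ ℂ) P n) ^ 2
      ≤ ∑ n ∈ Finset.range N, 2 * (‖aeval w (P n)‖ ^ 2 +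
          ‖∫ x, (((P n).eval x : ℝ) : ℂ) * cauchyKernel hw x ∂σ‖ ^ 2) :=
        Finset.sum_le_sum fun n _ => by
          refine add_sq_le.trans_eq ?_
          simp only [mapSequence_apply, eval_map_ofReal]
          rw [eval_map_algebraMap]
    _ ≤ 2 * (2 * K + ‖hmemLp.toLp _‖ ^ 2) := by
        rw [← Finset.mul_sum, Finset.sum_add_distrib]
        gcongr
        exact hbessel

theorem HasBoundedEval.exists_forall_sq_norm_aeval_le (hbdd : HasBoundedEval σ w)
    (hσ : HasAllMoments σ) (hpos : ∀ p : ℝ[X], p ≠ 0 → 0 < ∫ x, p.eval x ^ 2 ∂σ)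
    (hw : w.im ≠ 0) {r : ℝ} (hr : 0 ≤ r) :
    ∃ M : ℝ, 0 ≤ M ∧ ∀ (p : ℝ[X]) (z : ℂ), ‖z - w‖ ≤ r →
      ‖aeval z p‖ ^ 2 ≤ M * ∫ x, p.eval x ^ 2 ∂σ := by
  have hL (p : ℝ[X]) : momentFunctional ℝ σ (p * p) = ∫ x, p.eval x ^ 2 ∂σ := by
    simp only [hσ.momentFunctional_eq_integral, eval_mul, sq]
  obtain ⟨P, hP⟩ := exists_isOrthonormalFor (L := momentFunctional ℝ σ)
    fun p hp => (hpos p hp).trans_eq (hL p).symm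
  obtain ⟨H, hH⟩ := hP.exists_sum_sq_solutionNorm_le hσ hw hbdd
  have hH0 : 0 ≤ H := by simpa using hH 0
  refine ⟨H * Real.exp (r * H) ^ 2, by positivity, fun p z hz => ?_⟩
  let N := p.natDegree + 1
  have hPz : ∑ n ∈ Finset.range N, ‖aeval z (P n)‖ ^ 2 ≤ H * Real.exp (r * H) ^ 2 := by
    have := sum_sq_le_of_le_add_mul_sum hr (fun n => solutionNorm_nonneg hw _)
      (fun n => norm_nonneg _) hH (hP.mapSequence_momentFunctional.norm_eval_le hσ hw hz) N
    simpa only [mapSequence_apply, eval_map_algebraMap] using this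
  have hp := hP.eq_sum (q := p) (n := N)
    (degree_le_natDegree.trans_lt (by exact_mod_cast p.natDegree.lt_succ_self))
  have hparseval : ∫ x, p.eval x ^ 2 ∂σ =
      ∑ n ∈ Finset.range N, momentFunctional ℝ σ (p * P n) ^ 2 := by
    rw [← hP.map_sum_smul_mul_self, ← hp, hL]
  have hnorm : ‖aeval z p‖ ≤
      ∑ n ∈ Finset.range N, ‖aeval z (P n)‖ * |momentFunctional ℝ σ (p * P n)| := by
    conv_lhs => rw [hp, map_sum]
    exact norm_sum_le_of_le _ fun n _ => by rw [map_smul, norm_smul, Real.norm_eq_abs, mul_comm]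
  calc ‖aeval z p‖ ^ 2
      ≤ (∑ n ∈ Finset.range N, ‖aeval z (P n)‖ * |momentFunctional ℝ σ (p * P n)|) ^ 2 := by gcongr
    _ ≤ (∑ n ∈ Finset.range N, ‖aeval z (P n)‖ ^ 2) *
          ∑ n ∈ Finset.range N, |momentFunctional ℝ σ (p * P n)| ^ 2 :=
        Finset.sum_mul_sq_le_sq_mul_sq ..
    _ ≤ H * Real.exp (r * H) ^ 2 * ∫ x, p.eval x ^ 2 ∂σ := by
        simp only [sq_abs, hparseval]
        gcongr

end LocalBound

section BoundedEvalAtSupport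

variable {μ : Measure ℝ} {a : ℝ}

lemma sq_norm_aeval_ofReal (p : ℝ[X]) (x : ℝ) : ‖aeval (x : ℂ) p‖ ^ 2 = p.eval x ^ 2 := by
  rw [← eval_map_algebraMap, eval_map_ofReal, Complex.norm_real, Real.norm_eq_abs, sq_abs]

/-- The measure with density `(x - a) ^ 2` with respect to `μ`. -/
def sqDistWeight (a : ℝ) (μ : Measure ℝ) : Measure ℝ :=
  μ.withDensity fun x => ENNReal.ofReal ((x - a) ^ 2)

lemma integral_sqDistWeight (f : ℝ → ℝ) :
    ∫ x, f x ∂(sqDistWeight a μ) = ∫ x, (x - a) ^ 2 * f x ∂μ := by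
  rw [sqDistWeight, integral_withDensity_eq_integral_toReal_smul (by fun_prop)
    (ae_of_all _ fun _ => ENNReal.ofReal_lt_top)]
  simp only [ENNReal.toReal_ofReal (sq_nonneg _), smul_eq_mul]

lemma hasAllMoments_sqDistWeight (hμ : HasAllMoments μ) (a : ℝ) :
    HasAllMoments (sqDistWeight a μ) := by
  refine hasAllMoments_of_integrable_pow_two_mul fun n => ?_
  refine (integrable_withDensity_iff_integrable_smul' (by fun_prop)
    (ae_of_all _ fun _ => ENNReal.ofReal_lt_top)).2 ?_
  have hpoly := hμ.integrable_eval ((X - C a) ^ 2 * X ^ (2 * n))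
  simpa only [ENNReal.toReal_ofReal (sq_nonneg _), smul_eq_mul, eval_mul, eval_pow, eval_sub,
    eval_X, eval_C] using hpoly

lemma HasAllMoments.integral_sqDistWeight_divByMonic_sq_le (hμ : HasAllMoments μ) (p : ℝ[X]) :
    ∫ x, (p /ₘ (X - C a)).eval x ^ 2 ∂(sqDistWeight a μ) ≤
      2 * ∫ x, p.eval x ^ 2 ∂μ + 2 * (μ.real Set.univ * p.eval a ^ 2) := by
  have := hμ.isFiniteMeasure
  have hsq : Integrable (fun x => p.eval x ^ 2) μ := (hμ.memLp_two_eval p).integrable_sq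
  calc ∫ x, (p /ₘ (X - C a)).eval x ^ 2 ∂(sqDistWeight a μ)
      = ∫ x, (p - C (p.eval a)).eval x ^ 2 ∂μ := by
        rw [integral_sqDistWeight]
        refine integral_congr_ae (ae_of_all _ fun x => ?_)
        simp only [eval_sub, eval_C, eval_sub_eval_eq_mul_eval_divByMonic, mul_pow]
    _ ≤ ∫ x, (2 * p.eval x ^ 2 + 2 * p.eval a ^ 2) ∂μ := by
        refine integral_mono (hμ.memLp_two_eval _).integrable_sq (by fun_prop) fun x => ?_
        simp only [eval_sub, eval_C]
        linarith [sq_nonneg (p.eval x + p.eval a)]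
    _ = _ := by
        rw [integral_add (by fun_prop) (by fun_prop), integral_const_mul, integral_const,
          smul_eq_mul]
        ring

lemma HasAllMoments.exists_eventually_sq_eval_le (hμ : HasAllMoments μ) {M : ℝ} (hM : 0 ≤ M)
    (hbound : ∀ᶠ x in nhds a, ∀ p : ℝ[X],
      p.eval x ^ 2 ≤ M * ∫ y, p.eval y ^ 2 ∂(sqDistWeight a μ)) :
    ∃ B : ℝ, 0 ≤ B ∧ ∀ᶠ x in nhds a, ∀ p : ℝ[X],
      p.eval a ^ 2 ≤ 4 * p.eval x ^ 2 + B * ∫ y, p.eval y ^ 2 ∂μ := by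
  let ε : ℝ := 1 / (8 * (M * μ.real Set.univ + 1))
  have hε : 0 < ε := by positivity
  have hεM : 8 * ε * M * μ.real Set.univ ≤ 1 := by
    calc 8 * ε * M * μ.real Set.univ
        = M * μ.real Set.univ / (M * μ.real Set.univ + 1) := by simp only [ε]; field_simp
      _ ≤ 1 := div_le_one_of_le₀ (by linarith) (by positivity)
  have hnear : ∀ᶠ x in nhds a, (x - a) ^ 2 < ε :=
    (Continuous.tendsto (by fun_prop) a).eventually_lt_const (by simpa using hε)
  refine ⟨8 * ε * M, by positivity, ?_⟩
  filter_upwards [hbound, hnear] with x hx hxε p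
  let q := p /ₘ (X - C a)
  have hq : q.eval x ^ 2 ≤
      M * (2 * ∫ y, p.eval y ^ 2 ∂μ + 2 * (μ.real Set.univ * p.eval a ^ 2)) :=
    (hx q).trans (by gcongr; exact hμ.integral_sqDistWeight_divByMonic_sq_le p)
  have hdist : (p.eval x - p.eval a) ^ 2 ≤
      ε * (M * (2 * ∫ y, p.eval y ^ 2 ∂μ + 2 * (μ.real Set.univ * p.eval a ^ 2))) := by
    rw [eval_sub_eval_eq_mul_eval_divByMonic, mul_pow]
    gcongr
  have hmass := mul_le_mul_of_nonneg_right hεM (sq_nonneg (p.eval a))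
  linarith [sq_nonneg (2 * p.eval x - p.eval a)]

lemma HasAllMoments.hasBoundedEval_of_eventually (hμ : HasAllMoments μ) (ha : a ∈ mSupp μ)
    {A B : ℝ} (hA : 0 ≤ A) (hB : 0 ≤ B) (h : ∀ᶠ x in nhds a, ∀ p : ℝ[X],
      p.eval a ^ 2 ≤ A * p.eval x ^ 2 + B * ∫ y, p.eval y ^ 2 ∂μ) :
    HasBoundedEval μ a := by
  have := hμ.isFiniteMeasure
  obtain ⟨U, hU, hUopen, haU⟩ := eventually_nhds_iff.1 h
  have hmass : 0 < μ.real U :=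
    ENNReal.toReal_pos (ha U (hUopen.mem_nhds haU)) (measure_ne_top _ _)
  refine ⟨A / μ.real U + B, by positivity, fun p => ?_⟩
  have hsq : Integrable (fun x => p.eval x ^ 2) μ := (hμ.memLp_two_eval p).integrable_sq
  have haverage : μ.real U * p.eval a ^ 2 ≤
      A * ∫ x, p.eval x ^ 2 ∂μ + μ.real U * (B * ∫ x, p.eval x ^ 2 ∂μ) := by
    calc μ.real U * p.eval a ^ 2 = ∫ _ in U, p.eval a ^ 2 ∂μ := by simp
      _ ≤ ∫ x in U, (A * p.eval x ^ 2 + B * ∫ y, p.eval y ^ 2 ∂μ) ∂μ :=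
          setIntegral_mono_on (integrable_const _).integrableOn
            ((hsq.const_mul A).add (integrable_const _)).integrableOn hUopen.measurableSet
            fun x hx => hU x hx p
      _ = A * ∫ x in U, p.eval x ^ 2 ∂μ + μ.real U * (B * ∫ x, p.eval x ^ 2 ∂μ) := by
          rw [integral_add (hsq.const_mul A).integrableOn (integrable_const _),
            integral_const_mul, setIntegral_const, smul_eq_mul]
      _ ≤ _ := by
          gcongr
          · exact ae_of_all _ fun x => sq_nonneg _
          · exact Measure.restrict_le_self
  rw [sq_norm_aeval_ofReal]
  refine le_of_mul_le_mul_left (haverage.trans_eq ?_) hmass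
  field_simp

end BoundedEvalAtSupport

section Determinacy

variable {μ : Measure ℝ} {a : ℝ}

lemma HasBoundedEval.exists_pos_mul_sq_eval_le (hbdd : HasBoundedEval μ a) :
    ∃ c : ℝ, 0 < c ∧ ∀ p : ℝ[X], c * p.eval a ^ 2 ≤ ∫ x, p.eval x ^ 2 ∂μ := by
  obtain ⟨K, hK, hbound⟩ := hbdd
  refine ⟨(K + 1)⁻¹, by positivity, fun p => ?_⟩
  have hp := hbound p
  rw [sq_norm_aeval_ofReal] at hp
  rw [inv_mul_le_iff₀ (by positivity)]
  have hnonneg : 0 ≤ ∫ x, p.eval x ^ 2 ∂μ := integral_nonneg fun x => sq_nonneg _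
  linarith

-- Subtracting a small multiple of the evaluation at `a` keeps the moment functional positive
-- semidefinite, so a representing measure of the difference and a point mass at `a` add up to `μ`.
theorem IsDeterminate.measure_singleton_ne_zero (hdet : IsDeterminate μ) (hμ : HasAllMoments μ)
    (hbdd : HasBoundedEval μ a) : μ {a} ≠ 0 := by
  obtain ⟨c, hc, hca⟩ := hbdd.exists_pos_mul_sq_eval_le
  let L : ℝ[X] →ₗ[ℝ] ℝ := momentFunctional ℝ μ - c • leval a
  have hL (p : ℝ[X]) : L p = ∫ x, p.eval x ∂μ - c * p.eval a := by
    simp [L, hμ.momentFunctional_eq_integral, leval]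
  obtain ⟨τ, hτ, hτL⟩ := exists_hasAllMoments_integral_pow_eq (L := L) fun p => by
    rw [hL, ← sq]
    simpa using hca p
  have hdirac (f : ℝ → ℝ) : Integrable f (ENNReal.ofReal c • Measure.dirac a) :=
    (integrable_dirac (by simp)).smul_measure ENNReal.ofReal_ne_top
  have hsplit : τ + ENNReal.ofReal c • Measure.dirac a = μ := by
    refine hdet _ (fun n => (hτ n).add_measure (hdirac _)) fun n => ?_
    have hn : Integrable (fun x : ℝ => x ^ n) τ := by simpa using hτ.integrable_eval (X ^ n)
    rw [integral_add_measure hn (hdirac _), integral_smul_measure, integral_dirac, hτL, hL,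
      ENNReal.toReal_ofReal hc.le]
    simp
  rw [← hsplit]
  simp [hc]

lemma frequently_ae_of_eventually_nhdsNE (ha : a ∈ mSupp μ) (hmass : μ {a} = 0) {p : ℝ → Prop}
    (hp : ∀ᶠ x in nhdsWithin a {a}ᶜ, p x) : ∃ᶠ x in ae μ, p x := by
  refine fun hnot => ha _ (eventually_nhdsWithin_iff.1 hp) ?_
  refine measure_mono_null (fun x hx => ?_) (measure_union_null (ae_iff.1 hnot) hmass)
  by_cases hxa : x = a
  · exact Or.inr hxa
  · exact Or.inl (not_not.2 (hx hxa))

lemma HasAllMoments.integral_sq_eval_pos (hμ : HasAllMoments μ) (ha : a ∈ mSupp μ)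
    (hmass : μ {a} = 0) {p : ℝ[X]} (hp : p ≠ 0) : 0 < ∫ x, p.eval x ^ 2 ∂μ := by
  refine (integral_nonneg fun x => sq_nonneg _).lt_of_ne' fun hzero => ?_
  have hae := (integral_eq_zero_iff_of_nonneg (fun x => sq_nonneg (p.eval x))
    (hμ.memLp_two_eval p).integrable_sq).1 hzero
  have hne : ∀ᶠ x in nhdsWithin a {a}ᶜ, p.eval x ≠ 0 :=
    nhdsNE_le_cofinite a (finite_setOfPred_isRoot hp).compl_mem_cofinite
  exact frequently_ae_of_eventually_nhdsNE ha hmass hne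
    (hae.mono fun x hx => not_not.2 (pow_eq_zero_iff two_ne_zero |>.1 hx))

lemma mem_mSupp_sqDistWeight (ha : a ∈ mSupp μ) (hmass : μ {a} = 0) :
    a ∈ mSupp (sqDistWeight a μ) := by
  intro U hU hzero
  have hnull : μ ({x | ENNReal.ofReal ((x - a) ^ 2) ≠ 0} ∩ U) = 0 :=
    (withDensity_apply_eq_zero (by fun_prop)).1 hzero
  refine frequently_ae_of_eventually_nhdsNE ha hmass ?_ (measure_eq_zero_iff_ae_notMem.1 hnull)
  filter_upwards [self_mem_nhdsWithin, mem_nhdsWithin_of_mem_nhds hU] with x hxa hxU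
  exact ⟨by simpa [sub_eq_zero] using hxa, hxU⟩

theorem isDeterminate_sqDistWeight (hμ : HasAllMoments μ) (hdet : IsDeterminate μ)
    (ha : a ∈ mSupp μ) (hmass : μ {a} = 0) : IsDeterminate (sqDistWeight a μ) := by
  intro ν hν heq
  by_contra hne
  have hσ := hasAllMoments_sqDistWeight hμ a
  have hpos (p : ℝ[X]) (hp : p ≠ 0) : 0 < ∫ x, p.eval x ^ 2 ∂(sqDistWeight a μ) :=
    hσ.integral_sq_eval_pos (mem_mSupp_sqDistWeight ha hmass)
      (withDensity_absolutelyContinuous _ _ hmass) hp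
  have hI : Complex.I.im ≠ 0 := by simp
  obtain ⟨M, hM, hlocal⟩ := (hasBoundedEval_of_ne hσ hν heq hne hI).exists_forall_sq_norm_aeval_le
    hσ hpos hI (r := ‖(a : ℂ) - Complex.I‖ + 1) (by positivity)
  have hnear : ∀ᶠ x : ℝ in nhds a, ‖(x : ℂ) - Complex.I‖ < ‖(a : ℂ) - Complex.I‖ + 1 :=
    (Continuous.tendsto (by fun_prop) a).eventually_lt_const (lt_add_one _)
  obtain ⟨B, hB, hB_le⟩ := hμ.exists_eventually_sq_eval_le hM <| hnear.mono fun x hx p => by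
    simpa only [sq_norm_aeval_ofReal] using hlocal p x hx.le
  exact hdet.measure_singleton_ne_zero hμ
    (hμ.hasBoundedEval_of_eventually ha zero_le_four hB hB_le) hmass

lemma withDensity_sub_pow_two_mul_succ (μ : Measure ℝ) (a : ℝ) (k : ℕ) :
    μ.withDensity (fun x => ENNReal.ofReal ((x - a) ^ (2 * (k + 1)))) =
      (sqDistWeight a μ).withDensity fun x => ENNReal.ofReal ((x - a) ^ (2 * k)) := by
  rw [sqDistWeight, ← withDensity_mul _ (by fun_prop) (by fun_prop)]
  congr 1 with x
  rw [Pi.mul_apply, ← ENNReal.ofReal_mul (sq_nonneg _)]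
  ring_nf

end Determinacy

theorem stmt7_general {μ : Measure ℝ} {a : ℝ} (hmom : HasAllMoments μ) (hdet : IsDeterminate μ)
    (ha : a ∈ mSupp μ) (hmass : μ {a} = 0) (k : ℕ) :
    IsDeterminate (μ.withDensity fun x => ENNReal.ofReal ((x - a) ^ (2 * k))) := by
  induction k generalizing μ with
  | zero => simpa using hdet
  | succ k ih =>
    rw [withDensity_sub_pow_two_mul_succ]
    exact ih (hasAllMoments_sqDistWeight hmom a) (isDeterminate_sqDistWeight hmom hdet ha hmass)
      (mem_mSupp_sqDistWeight ha hmass) (withDensity_absolutelyContinuous _ _ hmass)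

theorem stmt7 (μ : Measure ℝ) (hmom : HasAllMoments μ) (hinf : (mSupp μ).Infinite)
    (hdet : IsDeterminate μ) (hsupp : mSupp μ ⊆ Set.Ici (0 : ℝ))
    (h0 : (0 : ℝ) ∈ mSupp μ) (hmass : μ {0} = 0) :
    ∀ k : ℕ, IsDeterminate (μ.withDensity fun x => ENNReal.ofReal (x ^ (2 * k))) := by
  simpa only [sub_zero] using stmt7_general hmom hdet h0 hmass
end
end

section
/- Let μ be a determinate measure on ℝ with all moments finite and infinite support, such that supp(μ) ⊆ [0,∞) and 0 ∈ supp(μ) is not an isolated point of supp(μ). Let (p_n) be the orthonormal polynomials of μ. Then for every k ≥ 1 and every ε > 0, there exists N such that for all n ≥ N, the polynomial p_n has at least k distinct roots in the interval (0, ε); equivalently, for every fixed k ≥ 1, the k-th smallest zero x_{n,k} of p_n tends to 0 as n → ∞. -/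
open MeasureTheory Polynomial Filter

noncomputable section

/-!
Positivity of `f ↦ ∫ f dμ` on nonnegative polynomials forces the zeros of `p_n` to be real and
simple, and Gauss quadrature puts nonnegative masses on these zeros so that the resulting discrete
measure has the same moments as `μ` up to order `2n - 1`. Hence the moments of the quadrature
measures converge to those of `μ`. Bounded second moments make these measures tight, and every weak
limit point has the moments of `μ`, so by determinacy the quadrature measures converge weakly to
`μ`. A weak limit charges no open set that the approximating measures miss, so every neighbourhood
of a point of the support eventually contains a zero of `p_n`. As `0` is a non-isolated point of
the support, `(0, ε)` contains `k` support points; disjoint neighbourhoods of them inside `(0, ε)`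
give `k` distinct zeros.
-/

open scoped Topology NNReal ENNReal

section OrthogonalPolynomials

/-- `P` is an orthogonal polynomial for the linear functional `L`: it is orthogonal, with respect
to the form `(f, g) ↦ L (f * g)`, to all polynomials of smaller degree. No normalization is
imposed. -/
def IsOrthogonalPoly {R : Type*} [CommRing R] (L : R[X] →ₗ[R] R) (P : R[X]) : Prop :=
  ∀ g : R[X], g.degree < P.degree → L (P * g) = 0

/-- A functional on real polynomials is positive definite if it is positive on the nonzero
polynomials that are nonnegative on `ℝ`. -/
def IsPositiveDefinite (L : ℝ[X] →ₗ[ℝ] ℝ) : Prop :=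
  ∀ f : ℝ[X], f ≠ 0 → (∀ x, 0 ≤ f.eval x) → 0 < L f

variable {F : Type*} [Field F]

theorem isOrthogonalPoly_of_sequence (L : F[X] →ₗ[F] F) (S : Polynomial.Sequence F) {n : ℕ}
    (horth : ∀ m < n, L (S n * S m) = 0) : IsOrthogonalPoly L (S n) := by
  intro g hg
  have hspan : Submodule.span F (S '' Set.Iio n) = degreeLT F n :=
    S.span_degreeLT fun i _ => (leadingCoeff_ne_zero.mpr (S.ne_zero i)).isUnit
  have hle : Submodule.span F (S '' Set.Iio n) ≤ LinearMap.ker (L ∘ₗ LinearMap.mulLeft F (S n)) :=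
    Submodule.span_le.mpr <| Set.forall_mem_image.mpr horth
  exact hle <| by rwa [hspan, mem_degreeLT, ← S.degree_eq n]

namespace IsOrthogonalPoly

theorem map_eq_sum_roots [DecidableEq F] {L : F[X] →ₗ[F] F} {P f : F[X]}
    (hP : IsOrthogonalPoly L P) (hroots : P.roots.toFinset.card = P.natDegree)
    (hf : f.degree < P.degree + P.degree) :
    L f = ∑ a ∈ P.roots.toFinset, f.eval a * L (Lagrange.basis P.roots.toFinset id a) := by
  have hP0 : P ≠ 0 := by
    rintro rfl
    simp at hf
  have hquot : (f / P).degree < P.degree := by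
    by_cases hPf : P.degree ≤ f.degree
    · rw [← degree_add_div hP0 hPf] at hf
      exact lt_of_add_lt_add_left hf
    · rw [(Polynomial.div_eq_zero_iff hP0).mpr (not_le.mp hPf), degree_zero]
      exact bot_lt_iff_ne_bot.mpr (degree_ne_bot.mpr hP0)
  have hrem : (f % P).degree < (P.roots.toFinset.card : WithBot ℕ) := by
    rw [hroots, ← degree_eq_natDegree hP0]
    exact EuclideanDomain.mod_lt f hP0
  have hLrem : L f = L (f % P) := by
    conv_lhs => rw [← EuclideanDomain.div_add_mod f P]
    rw [map_add, hP _ hquot, zero_add]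
  rw [hLrem, Lagrange.eq_interpolate Function.injective_id.injOn hrem, Lagrange.interpolate_apply,
    map_sum]
  refine Finset.sum_congr rfl fun a ha => ?_
  have hPa : P.eval a = 0 := (mem_roots'.mp (Multiset.mem_toFinset.mp ha)).2
  have heval : (f % P).eval a = f.eval a := by
    conv_rhs => rw [← EuclideanDomain.div_add_mod f P]
    simp [hPa]
  rw [← smul_eq_C_mul, map_smul, smul_eq_mul, id, heval]

variable {L : ℝ[X] →ₗ[ℝ] ℝ} {P : ℝ[X]}

theorem isUnit_of_dvd_of_nonneg (hP : IsOrthogonalPoly L P) (hL : IsPositiveDefinite L)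
    (hP0 : P ≠ 0) {h : ℝ[X]} (hdvd : h ∣ P) (hnonneg : ∀ x, 0 ≤ h.eval x) : IsUnit h := by
  obtain ⟨g, rfl⟩ := hdvd
  obtain ⟨hh0, hg0⟩ := mul_ne_zero_iff.mp hP0
  by_contra hunit
  have hdeg : g.degree < (h * g).degree := by
    rw [degree_mul, degree_eq_natDegree hh0, degree_eq_natDegree hg0]
    have := natDegree_pos_iff_degree_pos.mpr (degree_pos_of_ne_zero_of_nonunit hh0 hunit)
    exact_mod_cast Nat.lt_add_of_pos_left this
  have hpos : 0 < L (h * g * g) := by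
    refine hL _ (mul_ne_zero hP0 hg0) fun x => ?_
    simpa only [eval_mul, mul_assoc] using mul_nonneg (hnonneg x) (mul_self_nonneg _)
  exact hpos.ne' (hP g hdeg)

theorem squarefree (hP : IsOrthogonalPoly L P) (hL : IsPositiveDefinite L) (hP0 : P ≠ 0) :
    Squarefree P := fun h hdvd =>
  isUnit_of_mul_isUnit_left <| hP.isUnit_of_dvd_of_nonneg hL hP0 hdvd fun x => by
    simpa only [eval_mul] using mul_self_nonneg _

theorem exists_root_of_dvd (hP : IsOrthogonalPoly L P) (hL : IsPositiveDefinite L) (hP0 : P ≠ 0)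
    {h : ℝ[X]} (hdvd : h ∣ P) (hunit : ¬IsUnit h) : ∃ x, h.IsRoot x := by
  obtain ⟨x, hx⟩ : ∃ x, h.eval x < 0 := by
    contrapose! hunit
    exact hP.isUnit_of_dvd_of_nonneg hL hP0 hdvd hunit
  obtain ⟨y, hy⟩ : ∃ y, 0 < h.eval y := by
    contrapose! hunit
    refine IsUnit.neg_iff h |>.mp <|
      hP.isUnit_of_dvd_of_nonneg hL hP0 (neg_dvd.mpr hdvd) fun y => ?_
    simpa using hunit y
  exact mem_range_of_exists_le_of_exists_ge h.continuous ⟨x, hx.le⟩ ⟨y, hy.le⟩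

theorem splits (hP : IsOrthogonalPoly L P) (hL : IsPositiveDefinite L) : P.Splits := by
  obtain rfl | hP0 := eq_or_ne P 0
  · exact Splits.zero
  obtain ⟨q, hq, hcard, hqroots⟩ := exists_prod_multiset_X_sub_C_mul P
  have hq0 : q ≠ 0 := right_ne_zero_of_mul (hq ▸ hP0)
  have hunit : IsUnit q := by
    by_contra hunit
    obtain ⟨x, hx⟩ := hP.exists_root_of_dvd hL hP0 (Dvd.intro_left _ hq) hunit
    simpa [hqroots] using (mem_roots hq0).mpr hx
  rwa [natDegree_eq_zero_of_isUnit hunit, add_zero, ← splits_iff_card_roots] at hcard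

theorem card_toFinset_roots (hP : IsOrthogonalPoly L P) (hL : IsPositiveDefinite L) :
    P.roots.toFinset.card = P.natDegree := by
  obtain rfl | hP0 := eq_or_ne P 0
  · simp
  have hnodup : P.roots.Nodup :=
    nodup_roots (PerfectField.separable_iff_squarefree.mpr (hP.squarefree hL hP0))
  rw [Multiset.toFinset_card_of_nodup hnodup, (hP.splits hL).natDegree_eq_card_roots]

theorem map_basis_roots_nonneg (hP : IsOrthogonalPoly L P) (hL : IsPositiveDefinite L) {a : ℝ}
    (ha : a ∈ P.roots.toFinset) : 0 ≤ L (Lagrange.basis P.roots.toFinset id a) := by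
  set ℓ := Lagrange.basis P.roots.toFinset id a
  have hP0 : P ≠ 0 := (mem_roots'.mp (Multiset.mem_toFinset.mp ha)).1
  have hℓ0 : ℓ ≠ 0 := Lagrange.basis_ne_zero Function.injective_id.injOn ha
  have hcard := hP.card_toFinset_roots hL
  have hℓdeg : ℓ.degree < P.degree := by
    rw [Lagrange.degree_basis Function.injective_id.injOn ha, hcard, degree_eq_natDegree hP0]
    have : 0 < P.natDegree := hcard ▸ Finset.card_pos.mpr ⟨a, ha⟩
    exact_mod_cast Nat.sub_lt this one_pos
  have hsqdeg : (ℓ * ℓ).degree < P.degree + P.degree := by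
    rw [degree_mul]
    exact WithBot.add_lt_add_of_le_of_lt (degree_ne_bot.mpr hℓ0) hℓdeg.le hℓdeg
  have hsq : L (ℓ * ℓ) = L ℓ := by
    rw [hP.map_eq_sum_roots hcard hsqdeg, Finset.sum_eq_single_of_mem a ha]
    · have : ℓ.eval a = 1 := Lagrange.eval_basis_self (v := id) Function.injective_id.injOn ha
      rw [eval_mul, this, one_mul, one_mul]
    · intro b hb hba
      have : ℓ.eval b = 0 := Lagrange.eval_basis_of_ne (v := id) hba.symm hb
      rw [eval_mul, this, zero_mul, zero_mul]
  rw [← hsq]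
  exact (hL _ (mul_ne_zero hℓ0 hℓ0) fun x => by simpa using mul_self_nonneg _).le

end IsOrthogonalPoly

end OrthogonalPolynomials

section MomentFunctional

variable {μ : Measure ℝ}

theorem mSupp_eq_support (μ : Measure ℝ) : mSupp μ = μ.support := by
  ext x
  simp only [mSupp, Set.mem_ofPred_eq, Measure.mem_support_iff_forall, pos_iff_ne_zero]

namespace HasAllMoments

theorem isFiniteMeasure_s9 (hμ : HasAllMoments μ) : IsFiniteMeasure μ :=
  (integrable_const_iff_isFiniteMeasure one_ne_zero).mp <| by simpa only [pow_zero] using hμ 0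

/-- A measure with all moments, as an element of the space `FiniteMeasure ℝ` that carries the
topology of weak convergence. -/
def toFiniteMeasure (hμ : HasAllMoments μ) : FiniteMeasure ℝ :=
  ⟨μ, hμ.isFiniteMeasure_s9⟩

theorem integrable_pow (hμ : HasAllMoments μ) (n : ℕ) : Integrable (fun x : ℝ => x ^ n) μ :=
  (hμ n).mono' (by fun_prop) (ae_of_all _ fun x => (norm_pow x n).le)

theorem memLp_two_pow (hμ : HasAllMoments μ) (n : ℕ) : MemLp (fun x : ℝ => x ^ n) 2 μ := by
  rw [memLp_two_iff_integrable_sq (by fun_prop)]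
  simpa only [pow_mul] using hμ.integrable_pow (n * 2)

theorem integrable_eval_s9 (hμ : HasAllMoments μ) (f : ℝ[X]) : Integrable (fun x => f.eval x) μ := by
  simp only [eval_eq_sum_range]
  exact integrable_finsetSum _ fun n _ => (hμ.integrable_pow n).const_mul _

/-- The functional `f ↦ ∫ f dμ` on polynomials, which encodes the moment sequence of `μ`. -/
def momentFunctional (hμ : HasAllMoments μ) : ℝ[X] →ₗ[ℝ] ℝ where
  toFun f := ∫ x, f.eval x ∂μ
  map_add' f g := by
    simpa only [eval_add] using integral_add (hμ.integrable_eval_s9 f) (hμ.integrable_eval_s9 g)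
  map_smul' c f := by
    simpa only [eval_smul, RingHom.id_apply] using integral_smul c fun x => f.eval x

theorem momentFunctional_apply (hμ : HasAllMoments μ) (f : ℝ[X]) :
    hμ.momentFunctional f = ∫ x, f.eval x ∂μ := rfl

theorem isPositiveDefinite_momentFunctional (hμ : HasAllMoments μ)
    (hinf : μ.support.Infinite) : IsPositiveDefinite hμ.momentFunctional := by
  intro f hf hnonneg
  obtain ⟨x, hxμ, hxf⟩ := hinf.exists_notMem_finset f.roots.toFinset
  have hfx : f.eval x ≠ 0 := fun h => hxf <| Multiset.mem_toFinset.mpr <| (mem_roots hf).mpr h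
  rw [momentFunctional_apply,
    integral_pos_iff_support_of_nonneg hnonneg (hμ.integrable_eval_s9 f)]
  exact (Measure.mem_support_iff_forall x).mp hxμ _ (f.continuous.isOpen_support.mem_nhds hfx)

end HasAllMoments

end MomentFunctional

section GaussQuadrature

/-- The Gauss quadrature measure of the functional `L` with nodes at the zeros of `P`; the weights
are the values of `L` at the Lagrange basis polynomials, truncated at `0` by `ENNReal.ofReal`. -/
def gaussQuadrature (L : ℝ[X] →ₗ[ℝ] ℝ) (P : ℝ[X]) : Measure ℝ :=
  ∑ a ∈ P.roots.toFinset,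
    ENNReal.ofReal (L (Lagrange.basis P.roots.toFinset id a)) • Measure.dirac a

variable (L : ℝ[X] →ₗ[ℝ] ℝ) (P : ℝ[X])

theorem hasAllMoments_gaussQuadrature : HasAllMoments (gaussQuadrature L P) := fun _ =>
  integrable_finsetSum_measure.mpr fun _ _ =>
    (integrable_dirac enorm_lt_top).smul_measure ENNReal.ofReal_ne_top

variable {L P}

theorem exists_isRoot_of_gaussQuadrature_ne_zero {U : Set ℝ} (hU : gaussQuadrature L P U ≠ 0) :
    ∃ a ∈ U, P.IsRoot a := by
  simp only [gaussQuadrature, Measure.coe_finsetSum, Finset.sum_apply, Measure.smul_apply] at hU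
  obtain ⟨a, ha, hne⟩ := Finset.exists_ne_zero_of_sum_ne_zero hU
  refine ⟨a, ?_, (mem_roots'.mp (Multiset.mem_toFinset.mp ha)).2⟩
  by_contra haU
  simp [Measure.dirac_apply, haU] at hne

theorem IsOrthogonalPoly.integral_gaussQuadrature (hP : IsOrthogonalPoly L P)
    (hL : IsPositiveDefinite L) {f : ℝ[X]} (hf : f.degree < P.degree + P.degree) :
    ∫ x, f.eval x ∂gaussQuadrature L P = L f := by
  rw [gaussQuadrature, integral_finsetSum_measure fun _ _ =>
    (integrable_dirac enorm_lt_top).smul_measure ENNReal.ofReal_ne_top,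
    hP.map_eq_sum_roots (hP.card_toFinset_roots hL) hf]
  refine Finset.sum_congr rfl fun a ha => ?_
  rw [integral_smul_measure, integral_dirac,
    ENNReal.toReal_ofReal (hP.map_basis_roots_nonneg hL ha), smul_eq_mul, mul_comm]

end GaussQuadrature

section WeakConvergence

theorem integral_add_const_sq {X : Type*} [MeasurableSpace X] {μ : Measure X} [IsFiniteMeasure μ]
    {f : X → ℝ} (hf : MemLp f 2 μ) (t : ℝ) :
    ∫ x, (f x + t) ^ 2 ∂μ = ∫ x, f x ^ 2 ∂μ + 2 * t * ∫ x, f x ∂μ + t ^ 2 * μ.real Set.univ := by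
  have hlin : Integrable (fun x => 2 * t * f x) μ := (hf.integrable one_le_two).const_mul _
  calc ∫ x, (f x + t) ^ 2 ∂μ
    _ = ∫ x, (f x ^ 2 + (2 * t * f x + t ^ 2)) ∂μ := by congr! 2; ring
    _ = ∫ x, f x ^ 2 ∂μ + (∫ x, 2 * t * f x ∂μ + ∫ _, t ^ 2 ∂μ) := by
      rw [integral_add hf.integrable_sq (hlin.fun_add (integrable_const _)),
        integral_add hlin (integrable_const _)]
    _ = _ := by
      rw [integral_const_mul, integral_const, smul_eq_mul]
      ring

variable {X ι : Type*} [TopologicalSpace X] [MeasurableSpace X] [OpensMeasurableSpace X]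
  {l : Filter ι} {ν : ι → FiniteMeasure X} {μ : FiniteMeasure X}

theorem lintegral_min_le_liminf_lintegral_of_tendsto (hν : Tendsto ν l (𝓝 μ)) {g : X → ℝ≥0}
    (hg : Continuous g) (R : ℝ≥0) :
    ∫⁻ x, (min (g x) R : ℝ≥0) ∂(μ : Measure X) ≤
      l.liminf fun i => ∫⁻ x, g x ∂(ν i : Measure X) := by
  let gR : BoundedContinuousFunction X ℝ≥0 :=
    .mkOfBound ⟨fun x => min (g x) R, by fun_prop⟩ R fun x y =>
      abs_sub_le_of_nonneg_of_le (NNReal.coe_nonneg _) (NNReal.coe_le_coe.mpr (min_le_right _ _))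
        (NNReal.coe_nonneg _) (NNReal.coe_le_coe.mpr (min_le_right _ _))
  have hlim := FiniteMeasure.tendsto_iff_forall_lintegral_tendsto.mp hν gR
  obtain rfl | _ := l.eq_or_neBot
  · simp
  exact hlim.liminf_eq.symm.trans_le <| liminf_le_liminf <| .of_forall fun i =>
    lintegral_mono fun x => ENNReal.coe_le_coe.mpr (min_le_left _ _)

theorem lintegral_le_liminf_lintegral_of_tendsto (hν : Tendsto ν l (𝓝 μ)) {g : X → ℝ≥0}
    (hg : Continuous g) :
    ∫⁻ x, g x ∂(μ : Measure X) ≤ l.liminf fun i => ∫⁻ x, g x ∂(ν i : Measure X) := by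
  have hsup : ∀ x, (g x : ℝ≥0∞) = ⨆ n : ℕ, ((min (g x) n : ℝ≥0) : ℝ≥0∞) := by
    intro x
    obtain ⟨n, hn⟩ := exists_nat_ge (g x)
    refine le_antisymm (le_iSup_of_le n ?_) (iSup_le fun n => ?_)
    · rw [min_eq_left hn]
    · exact ENNReal.coe_le_coe.mpr (min_le_left _ _)
  calc ∫⁻ x, g x ∂(μ : Measure X)
    _ = ∫⁻ x, ⨆ n : ℕ, ((min (g x) n : ℝ≥0) : ℝ≥0∞) ∂(μ : Measure X) := lintegral_congr hsup
    _ = ⨆ n : ℕ, ∫⁻ x, (min (g x) n : ℝ≥0) ∂(μ : Measure X) := by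
      refine lintegral_iSup (fun n => (hg.min continuous_const).measurable.coe_nnreal_ennreal) ?_
      intro m n hmn x
      dsimp only
      gcongr
    _ ≤ l.liminf fun i => ∫⁻ x, g x ∂(ν i : Measure X) :=
      iSup_le fun n => lintegral_min_le_liminf_lintegral_of_tendsto hν hg n

theorem integrable_and_integral_le_of_tendsto [l.NeBot] (hν : Tendsto ν l (𝓝 μ)) {g : X → ℝ}
    (hg : Continuous g) (hg0 : ∀ x, 0 ≤ g x) (hint : ∀ i, Integrable g (ν i : Measure X)) {b : ℝ}
    (hb : Tendsto (fun i => ∫ x, g x ∂(ν i : Measure X)) l (𝓝 b)) :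
    Integrable g (μ : Measure X) ∧ ∫ x, g x ∂(μ : Measure X) ≤ b := by
  have hb0 : 0 ≤ b := ge_of_tendsto' hb fun i => integral_nonneg hg0
  have hlint : ∫⁻ x, ENNReal.ofReal (g x) ∂(μ : Measure X) ≤ ENNReal.ofReal b := by
    refine (lintegral_le_liminf_lintegral_of_tendsto hν
      (continuous_real_toNNReal.comp hg)).trans_eq ?_
    refine ((ENNReal.tendsto_ofReal hb).congr fun i => ?_).liminf_eq
    exact ofReal_integral_eq_lintegral_ofReal (hint i) (ae_of_all _ hg0)
  have hgμ : Integrable g (μ : Measure X) := by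
    refine ⟨hg.aestronglyMeasurable, ?_⟩
    rw [hasFiniteIntegral_iff_ofReal (ae_of_all _ hg0)]
    exact hlint.trans_lt ENNReal.ofReal_lt_top
  rw [← ofReal_integral_eq_lintegral_ofReal hgμ (ae_of_all _ hg0)] at hlint
  exact ⟨hgμ, (ENNReal.ofReal_le_ofReal_iff hb0).mp hlint⟩

theorem memLp_two_and_integral_eq_of_tendsto [l.NeBot] (hν : Tendsto ν l (𝓝 μ)) {f : X → ℝ}
    (hf : Continuous f) (hint : ∀ i, MemLp f 2 (ν i : Measure X)) {a b : ℝ}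
    (ha : Tendsto (fun i => ∫ x, f x ∂(ν i : Measure X)) l (𝓝 a))
    (hb : Tendsto (fun i => ∫ x, f x ^ 2 ∂(ν i : Measure X)) l (𝓝 b)) :
    MemLp f 2 (μ : Measure X) ∧ ∫ x, f x ∂(μ : Measure X) = a := by
  have hfμ : MemLp f 2 (μ : Measure X) :=
    (memLp_two_iff_integrable_sq hf.aestronglyMeasurable).mpr
      (integrable_and_integral_le_of_tendsto hν (by fun_prop) (fun x => sq_nonneg _)
        (fun i => (hint i).integrable_sq) hb).1
  refine ⟨hfμ, ?_⟩
  have hmass : Tendsto (fun i => (ν i : Measure X).real Set.univ) l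
      (𝓝 ((μ : Measure X).real Set.univ)) := NNReal.tendsto_coe.mpr hν.mass
  -- Fatou for `(f + t) ^ 2` bounds a linear function of `t` from above, so its slope vanishes.
  have hslope : ∀ t, t * (2 * (∫ x, f x ∂(μ : Measure X) - a)) ≤
      b - ∫ x, f x ^ 2 ∂(μ : Measure X) := by
    intro t
    have hlim : Tendsto (fun i => ∫ x, (f x + t) ^ 2 ∂(ν i : Measure X)) l
        (𝓝 (b + 2 * t * a + t ^ 2 * (μ : Measure X).real Set.univ)) := by
      simp only [integral_add_const_sq (hint _)]
      exact (hb.add (ha.const_mul _)).add (hmass.const_mul _)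
    have hle := (integrable_and_integral_le_of_tendsto hν (by fun_prop)
      (fun x => sq_nonneg (f x + t)) (fun i => ((hint i).add (memLp_const t)).integrable_sq) hlim).2
    rw [integral_add_const_sq hfμ] at hle
    linarith
  by_contra hne
  have hd : 2 * (∫ x, f x ∂(μ : Measure X) - a) ≠ 0 := mul_ne_zero two_ne_zero (sub_ne_zero.mpr hne)
  have := hslope ((b - ∫ x, f x ^ 2 ∂(μ : Measure X) + 1) / (2 * (∫ x, f x ∂(μ : Measure X) - a)))
  rw [div_mul_cancel₀ _ hd] at this
  linarith

theorem eventually_measure_ne_zero_of_tendsto [CompletelyRegularSpace X] (hν : Tendsto ν l (𝓝 μ))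
    {x : X} (hx : x ∈ (μ : Measure X).support) {U : Set X} (hU : U ∈ 𝓝 x) :
    ∀ᶠ i in l, (ν i : Measure X) U ≠ 0 := by
  obtain ⟨f, hf, hfx, hfU⟩ := CompletelyRegularSpace.completely_regular x (interior U)ᶜ
    isOpen_interior.isClosed_compl (by simpa using mem_interior_iff_mem_nhds.mpr hU)
  let g : X → ℝ≥0 := fun y => unitInterval.toNNReal (unitInterval.symm (f y))
  have hg : Continuous g := by fun_prop
  have hg0 : ∀ y, g y = 0 ↔ f y = 1 := fun y => by
    rw [← NNReal.coe_eq_zero, unitInterval.coe_toNNReal, Set.Icc.coe_eq_zero,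
      unitInterval.symm_eq_zero]
  have hlint : ∀ ρ : Measure X, 0 < ∫⁻ y, g y ∂ρ ↔ 0 < ρ {y | f y ≠ 1} := fun ρ => by
    rw [lintegral_pos_iff_support hg.measurable.coe_nnreal_ennreal]
    simp only [Function.support, ne_eq, ENNReal.coe_eq_zero, hg0]
  have hμ : 0 < ∫⁻ y, g y ∂(μ : Measure X) :=
    (hlint _).mpr <| (Measure.mem_support_iff_forall x).mp hx _ <|
      hf.continuousAt.eventually_ne (by simp [hfx])
  filter_upwards [eventually_lt_of_lt_liminf
    (hμ.trans_le (lintegral_le_liminf_lintegral_of_tendsto hν hg))] with i hi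
  refine (((hlint _).mp hi).trans_le (measure_mono fun y hy => ?_)).ne'
  by_contra hyU
  exact hy (hfU fun h => hyU (interior_subset h))

theorem finiteMeasure_compl_le_div_of_lintegral_le {g : X → ℝ≥0} (hg : Continuous g)
    {ν : FiniteMeasure X} {B : ℝ≥0} (hν : ∫⁻ x, g x ∂(ν : Measure X) ≤ B) {r : ℝ≥0} (hr : r ≠ 0) :
    ν (g ⁻¹' Set.Iic r)ᶜ ≤ B / r := by
  rw [← ENNReal.coe_le_coe, ENNReal.coe_div hr]
  refine le_trans ?_ ((meas_ge_le_lintegral_div hg.measurable.coe_nnreal_ennreal.aemeasurable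
    (ENNReal.coe_ne_zero.mpr hr) ENNReal.coe_ne_top).trans (ENNReal.div_le_div_right hν _))
  rw [FiniteMeasure.ennreal_coeFn_eq_coeFn_toMeasure]
  refine measure_mono fun x hx => ENNReal.coe_le_coe.mpr ?_
  exact (not_le.mp hx : r < g x).le

theorem isCompact_setOf_mass_le_lintegral_le {X : Type*} [TopologicalSpace X] [T2Space X]
    [MeasurableSpace X] [BorelSpace X] {g : X → ℝ≥0} (hg : Continuous g)
    (hcompact : ∀ r, IsCompact (g ⁻¹' Set.Iic r)) (C B : ℝ≥0) :
    IsCompact {ν : FiniteMeasure X | ν.mass ≤ C ∧ ∫⁻ x, g x ∂(ν : Measure X) ≤ B} := by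
  have htail : Tendsto (fun n : ℕ => B / (n + 1 : ℕ)) atTop (𝓝 0) :=
    (tendsto_const_div_atTop_nhds_zero_nat B).comp (tendsto_add_atTop_nat 1)
  have htight := isCompact_setOfPred_finiteMeasure_mass_le_compl_isCompact_le C htail
    (fun n => hcompact (n + 1 : ℕ))
    (.inr fun m n hmn => Set.preimage_mono (Set.Iic_subset_Iic.mpr (by gcongr)))
  rw [isCompact_iff_ultrafilter_le_nhds]
  intro F hF
  obtain ⟨ν, hν, hFν⟩ := htight.ultrafilter_le_nhds F <| hF.trans <| principal_mono.mpr
    fun ρ hρ => ⟨hρ.1, fun n => finiteMeasure_compl_le_div_of_lintegral_le hg hρ.2 (by positivity)⟩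
  have hlim : Tendsto id (F : Filter (FiniteMeasure X)) (𝓝 ν) := hFν
  refine ⟨ν, ⟨hν.1, (lintegral_le_liminf_lintegral_of_tendsto hlim hg).trans ?_⟩, hFν⟩
  refine liminf_le_of_frequently_le ?_ (by isBoundedDefault)
  exact (Eventually.mono (le_principal_iff.mp hF) fun ρ hρ => hρ.2).frequently

end WeakConvergence

section MethodOfMoments

variable {ι : Type*} {l : Filter ι} {ν : ι → FiniteMeasure ℝ} {μ : FiniteMeasure ℝ}

theorem hasAllMoments_and_integral_pow_eq_of_tendsto [l.NeBot] (hlim : Tendsto ν l (𝓝 μ))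
    (hν : ∀ i, HasAllMoments (ν i : Measure ℝ)) {m : ℕ → ℝ}
    (hm : ∀ n, Tendsto (fun i => ∫ x, x ^ n ∂(ν i : Measure ℝ)) l (𝓝 (m n))) :
    HasAllMoments (μ : Measure ℝ) ∧ ∀ n, ∫ x, x ^ n ∂(μ : Measure ℝ) = m n := by
  have hpow : ∀ n, MemLp (fun x : ℝ => x ^ n) 2 (μ : Measure ℝ) ∧
      ∫ x, x ^ n ∂(μ : Measure ℝ) = m n := fun n =>
    memLp_two_and_integral_eq_of_tendsto hlim (continuous_pow n)
      (fun i => (hν i).memLp_two_pow n) (hm n)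
      (by simpa only [pow_mul] using hm (n * 2))
  refine ⟨fun n => ?_, fun n => (hpow n).2⟩
  simpa only [abs_pow] using ((hpow n).1.integrable one_le_two).abs

theorem isCompact_toNNReal_sq_preimage_Iic (r : ℝ≥0) :
    IsCompact ((fun x : ℝ => (x ^ 2).toNNReal) ⁻¹' Set.Iic r) := by
  convert isCompact_closedBall (0 : ℝ) (√r) using 1
  ext x
  rw [Set.mem_preimage, Set.mem_Iic, Real.toNNReal_le_iff_le_coe, mem_closedBall_zero_iff,
    Real.norm_eq_abs, Real.le_sqrt (abs_nonneg x) r.coe_nonneg, sq_abs]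

theorem exists_isCompact_eventually_mem_of_tendsto_integral_pow
    (hν : ∀ i, HasAllMoments (ν i : Measure ℝ)) {m : ℕ → ℝ}
    (hm : ∀ n, Tendsto (fun i => ∫ x, x ^ n ∂(ν i : Measure ℝ)) l (𝓝 (m n))) :
    ∃ K : Set (FiniteMeasure ℝ), IsCompact K ∧ ∀ᶠ i in l, ν i ∈ K := by
  refine ⟨_, isCompact_setOf_mass_le_lintegral_le (by fun_prop) isCompact_toNNReal_sq_preimage_Iic
    (m 0 + 1).toNNReal (m 2 + 1).toNNReal, ?_⟩
  filter_upwards [(hm 0).eventually_le_const (lt_add_one _),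
    (hm 2).eventually_le_const (lt_add_one _)] with i hmass hsq
  constructor
  · exact NNReal.le_toNNReal_of_coe_le (by simpa using hmass)
  · exact (ofReal_integral_eq_lintegral_ofReal ((hν i).integrable_pow 2)
      (ae_of_all _ sq_nonneg)).symm.trans_le (ENNReal.ofReal_le_ofReal hsq)

theorem IsDeterminate.tendsto_of_tendsto_integral_pow (hμ : IsDeterminate μ)
    (hν : ∀ i, HasAllMoments (ν i : Measure ℝ))
    (hm : ∀ n, Tendsto (fun i => ∫ x, x ^ n ∂(ν i : Measure ℝ)) l
      (𝓝 (∫ x, x ^ n ∂(μ : Measure ℝ)))) :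
    Tendsto ν l (𝓝 μ) := by
  obtain ⟨K, hK, hνK⟩ := exists_isCompact_eventually_mem_of_tendsto_integral_pow hν hm
  rw [tendsto_iff_ultrafilter]
  intro F hF
  obtain ⟨ρ, -, hρ⟩ := hK.ultrafilter_le_nhds (F.map ν) (le_principal_iff.mpr (hF hνK))
  obtain ⟨hρmom, hρeq⟩ := hasAllMoments_and_integral_pow_eq_of_tendsto hρ hν
    fun n => (hm n).mono_left hF
  have : ρ = μ := Subtype.ext (hμ ρ hρmom hρeq)
  exact this ▸ hρ

end MethodOfMoments

section Zeros

variable {μ : Measure ℝ} {ι : Type*} {l : Filter ι} {P : ι → ℝ[X]}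

theorem IsDeterminate.tendsto_gaussQuadrature (hdet : IsDeterminate μ) (hμ : HasAllMoments μ)
    (hinf : μ.support.Infinite) (hP : ∀ i, IsOrthogonalPoly hμ.momentFunctional (P i))
    (hdeg : Tendsto (fun i => (P i).natDegree) l atTop) :
    Tendsto (fun i => (hasAllMoments_gaussQuadrature hμ.momentFunctional (P i)).toFiniteMeasure) l
      (𝓝 hμ.toFiniteMeasure) := by
  refine IsDeterminate.tendsto_of_tendsto_integral_pow hdet
    (fun i => hasAllMoments_gaussQuadrature _ (P i)) fun k => tendsto_const_nhds.congr' ?_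
  filter_upwards [hdeg.eventually_gt_atTop k] with i hi
  have hXk : (X ^ k : ℝ[X]).degree < (P i).degree + (P i).degree := by
    rw [degree_X_pow, degree_eq_natDegree (ne_zero_of_natDegree_gt hi)]
    exact_mod_cast hi.trans_le (Nat.le_add_right _ _)
  have hexact := (hP i).integral_gaussQuadrature (hμ.isPositiveDefinite_momentFunctional hinf) hXk
  simp only [hμ.momentFunctional_apply, eval_pow, eval_X] at hexact
  exact hexact.symm

theorem IsDeterminate.eventually_exists_isRoot_mem (hdet : IsDeterminate μ) (hμ : HasAllMoments μ)
    (hinf : μ.support.Infinite) (hP : ∀ i, IsOrthogonalPoly hμ.momentFunctional (P i))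
    (hdeg : Tendsto (fun i => (P i).natDegree) l atTop) {x : ℝ} (hx : x ∈ μ.support) {U : Set ℝ}
    (hU : U ∈ 𝓝 x) : ∀ᶠ i in l, ∃ z ∈ U, (P i).IsRoot z :=
  (eventually_measure_ne_zero_of_tendsto (hdet.tendsto_gaussQuadrature hμ hinf hP hdeg) hx hU).mono
    fun _ => exists_isRoot_of_gaussQuadrature_ne_zero

theorem eventually_exists_finset_card_eq_subset_inter {X ι : Type*} [TopologicalSpace X] [T2Space X]
    {l : Filter ι} {A U : Set X} {Z : ι → Set X}
    (hZ : ∀ x ∈ A, ∀ V ∈ 𝓝 x, ∀ᶠ i in l, (V ∩ Z i).Nonempty) (hU : IsOpen U)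
    (hAU : (A ∩ U).Infinite) (k : ℕ) :
    ∀ᶠ i in l, ∃ S : Finset X, S.card = k ∧ ↑S ⊆ U ∩ Z i := by
  classical
  obtain ⟨T, hT, hTcard⟩ := hAU.exists_subset_card_eq k
  obtain ⟨V, hV, hdisj⟩ := T.finite_toSet.t2_separation
  have hmeet : ∀ᶠ i in l, ∀ x ∈ T, ((V x ∩ U) ∩ Z i).Nonempty :=
    (eventually_all_finset T).mpr fun x hx => hZ x (hT hx).1 _ <|
      inter_mem ((hV x).2.mem_nhds (hV x).1) (hU.mem_nhds (hT hx).2)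
  filter_upwards [hmeet] with i hi
  choose! z hz using hi
  refine ⟨T.image z, ?_, ?_⟩
  · rw [Finset.card_image_of_injOn, hTcard]
    intro x hx y hy hxy
    by_contra hne
    exact Set.disjoint_left.mp (hdisj hx hy hne) (hz x hx).1.1 (hxy ▸ (hz y hy).1.1)
  · rw [Finset.coe_image, Set.image_subset_iff]
    exact fun x hx => ⟨(hz x hx).1.2, (hz x hx).2⟩

theorem infinite_inter_Ioo_of_mem_closure {α : Type*} [LinearOrder α] [TopologicalSpace α]
    [OrderTopology α] {A : Set α} {a b : α} (hA : A ⊆ Set.Ici a) (ha : a ∈ closure (A \ {a}))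
    (hab : a < b) : (A ∩ Set.Ioo a b).Infinite := by
  have hacc : AccPt a (𝓟 (Set.Iio b ∩ A)) :=
    AccPt.nhds_inter (accPt_principal_iff_clusterPt.mpr (mem_closure_iff_clusterPt.mp ha))
      (Iio_mem_nhds hab)
  refine ((Set.Infinite.of_accPt hacc).sdiff (Set.finite_singleton a)).mono ?_
  rintro x ⟨⟨hxb, hxA⟩, hxa⟩
  exact ⟨hxA, lt_of_le_of_ne (hA hxA) (Ne.symm hxa), hxb⟩

end Zeros

theorem stmt9 (μ : Measure ℝ) (hmom : HasAllMoments μ) (hinf : (mSupp μ).Infinite)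
    (hdet : IsDeterminate μ) (hsupp : mSupp μ ⊆ Set.Ici (0 : ℝ))
    (h0 : (0 : ℝ) ∈ mSupp μ) (hnotisol : (0 : ℝ) ∈ closure (mSupp μ \ {0}))
    (p : ℕ → Polynomial ℝ)
    (hdeg : ∀ n : ℕ, (p n).degree = n)
    (hlead : ∀ n : ℕ, 0 < (p n).leadingCoeff)
    (horth : ∀ n m : ℕ,
      ∫ x, (p n).eval x * (p m).eval x ∂μ = if n = m then 1 else 0) :
    ∀ k : ℕ, 1 ≤ k → ∀ ε : ℝ, 0 < ε → ∃ N : ℕ, ∀ n : ℕ, N ≤ n →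
      ∃ S : Finset ℝ, k ≤ S.card ∧ ↑S ⊆ Set.Ioo (0 : ℝ) ε ∧
        ∀ x ∈ S, (p n).eval x = 0 := by
  intro k _ ε hε
  rw [mSupp_eq_support] at hinf hsupp hnotisol
  let S : Polynomial.Sequence ℝ := ⟨p, hdeg⟩
  have horthPoly : ∀ n, IsOrthogonalPoly hmom.momentFunctional (S n) := fun n =>
    isOrthogonalPoly_of_sequence _ S fun m hm => by
      simpa [hmom.momentFunctional_apply, hm.ne'] using horth n m
  have hdegree : Tendsto (fun n => (S n).natDegree) atTop atTop :=
    tendsto_id.congr fun n => (S.natDegree_eq n).symm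
  have hroots := eventually_exists_finset_card_eq_subset_inter
    (fun x hx V hV => hdet.eventually_exists_isRoot_mem hmom hinf horthPoly hdegree hx hV)
    isOpen_Ioo (infinite_inter_Ioo_of_mem_closure hsupp hnotisol hε) k
  obtain ⟨N, hN⟩ := eventually_atTop.mp hroots
  refine ⟨N, fun n hn => ?_⟩
  obtain ⟨T, hcard, hT⟩ := hN n hn
  exact ⟨T, hcard.ge, fun x hx => (hT hx).1, fun x hx => (hT hx).2⟩
end
end
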